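/- Let G be a countably infinite discrete amenable group, X an infinite compact metrizable space, and α: G ↷ X a minimal free continuous action such that E_G(X) is compact and zero-dimensional in the weak* topology. Then the following are equivalent: (i) α is almost finite; (ii) α is m-almost finite for some m ≥ 0; (iii) α has dynamical comparison; (iv) α has dynamical m-comparison for some m ≥ 0. -/

import Mathlib

open MeasureTheory Set Pointwise

variable (G X : Type*)

section Defs

variable [Group G] [MetricSpace X] [MeasurableSpace X] [MulAction G X]

/-- A Borel probability measure is `G`-invariant. -/
def InvariantMeasure (μ : ProbabilityMeasure X) : Prop :=
  ∀ g : G, MeasureTheory.Measure.map (fun x => g • x) (μ : Measure X) = (μ : Measure X)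

/-- `M_G(X)`: the set of `G`-invariant Borel probability measures on `X`. -/
def MG : Set (ProbabilityMeasure X) := {μ | InvariantMeasure G X μ}

/-- `E_G(X)`: the set of ergodic `G`-invariant Borel probability measures on `X`,
i.e. invariant measures giving every `G`-invariant Borel set measure `0` or `1`. -/
def EG : Set (ProbabilityMeasure X) :=
  {μ | InvariantMeasure G X μ ∧
    ∀ A : Set X, MeasurableSet A → (∀ g : G, g • A = A) → μ A = 0 ∨ μ A = 1}

/-- The action of `G` on `X` is free. -/
def FreeAction : Prop := ∀ (g : G) (x : X), g • x = x → g = 1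

/-- The action of `G` on `X` is minimal: there is no proper nonempty closed invariant subset. -/
def MinimalAction : Prop :=
  ∀ C : Set X, IsClosed C → (∀ g : G, g • C ⊆ C) → C = ∅ ∨ C = Set.univ

/-- The small boundary property. -/
def SmallBoundaryProperty : Prop :=
  ∀ (x : X) (U : Set X), IsOpen U → x ∈ U →
    ∃ V : Set X, IsOpen V ∧ x ∈ V ∧ V ⊆ U ∧ ∀ μ ∈ MG G X, μ (frontier V) = 0

/-- `S` is a `(K,δ)`-invariant finite subset of `G`. -/
def FolnerInv (K : Finset G) (δ : ℝ) (S : Finset G) : Prop :=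
  (1 - δ) * (S.card : ℝ) ≤ ({s | s ∈ S ∧ ∀ k ∈ K, k * s ∈ S} : Set G).ncard

/-- `G` is amenable: it admits `(K,δ)`-invariant nonempty finite subsets for all `K, δ`. -/
def AmenableGroup : Prop :=
  ∀ (K : Finset G) (δ : ℝ), 0 < δ → ∃ S : Finset G, S.Nonempty ∧ FolnerInv G K δ S

/-- `(S, V)` is a tower: the translates `s • V`, `s ∈ S`, are pairwise disjoint. -/
def IsTower (S : Finset G) (V : Set X) : Prop :=
  (S : Set G).Pairwise fun s t => Disjoint (s • V) (t • V)

/-- `F ≺_m O`: subordination with `m`-colored multiplicity. -/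
def SubordinateM (m : ℕ) (F O : Set X) : Prop :=
  ∃ (n : ℕ) (U : Fin n → Set X) (s : Fin n → G) (c : Fin n → Fin (m + 1)),
    (∀ k, IsOpen (U k)) ∧ F ⊆ ⋃ k, U k ∧ (∀ k, s k • U k ⊆ O) ∧
    ∀ k l, k ≠ l → c k = c l → Disjoint (s k • U k) (s l • U l)

/-- The action has dynamical `m`-comparison. -/
def HasMComparison (m : ℕ) : Prop :=
  ∀ F O : Set X, IsClosed F → IsOpen O →
    (∀ μ ∈ MG G X, μ F < μ O) → SubordinateM G X m F O

/-- The action is `m`-almost finite. -/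
def MAlmostFinite (m : ℕ) : Prop :=
  ∀ (n : ℕ), 1 ≤ n → ∀ (K : Finset G) (δ : ℝ), 0 < δ →
    ∃ (I : ℕ) (S : Fin I → Finset G) (V : Fin I → Set X) (c : Fin I → Fin (m + 1))
      (S' : Fin I → Finset G),
      (∀ i, IsOpen (V i)) ∧
      (∀ i, IsTower G X (S i) (closure (V i))) ∧
      (∀ i, FolnerInv G K δ (S i)) ∧
      (∀ i, ∀ s ∈ S i, Metric.diam (s • closure (V i)) < δ) ∧
      (∀ i j, i ≠ j → c i = c j →
        Disjoint ((S i : Set G) • closure (V i)) ((S j : Set G) • closure (V j))) ∧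
      (∀ i, S' i ⊆ S i) ∧ (∀ i, ((S' i).card : ℝ) ≤ (S i).card / n) ∧
      SubordinateM G X 0 (Set.univ \ ⋃ i, (S i : Set G) • V i) (⋃ i, (S' i : Set G) • V i)

end Defs

section AFBasic

set_option linter.unusedSectionVars false

open Filter Topology

variable {G X} [Group G] [MetricSpace X] [MeasurableSpace X] [MulAction G X]

/-! ### Basic facts -/

lemma FolnerInv.mono {K K' : Finset G} {δ δ' : ℝ} {S : Finset G} (h : FolnerInv G K' δ' S)
    (hK : K ⊆ K') (hδ : δ' ≤ δ) : FolnerInv G K δ S := by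
  unfold FolnerInv at *
  have h1 : (({s | s ∈ S ∧ ∀ k ∈ K', k * s ∈ S} : Set G).ncard : ℝ) ≤
      ({s | s ∈ S ∧ ∀ k ∈ K, k * s ∈ S} : Set G).ncard := by
    have hsub : ({s | s ∈ S ∧ ∀ k ∈ K', k * s ∈ S} : Set G) ⊆ {s | s ∈ S ∧ ∀ k ∈ K, k * s ∈ S} :=
      fun s hs => ⟨hs.1, fun k hk => hs.2 k (hK hk)⟩
    have hfin : ({s | s ∈ S ∧ ∀ k ∈ K, k * s ∈ S} : Set G).Finite :=
      S.finite_toSet.subset fun s hs => hs.1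
    exact_mod_cast Set.ncard_le_ncard hsub hfin
  have h2 : (0 : ℝ) ≤ S.card := by positivity
  nlinarith

lemma folnerInv_iff [DecidableEq G] {K : Finset G} {δ : ℝ} {S : Finset G} :
    FolnerInv G K δ S ↔ (1 - δ) * (S.card : ℝ) ≤ (S.filter fun s => ∀ k ∈ K, k * s ∈ S).card := by
  unfold FolnerInv
  rw [← Set.ncard_coe_finset (S.filter _), Finset.coe_filter]

/-- Summation along a Folner set is almost invariant. -/
lemma FolnerInv.sum_le [DecidableEq G] {K : Finset G} {δ : ℝ} {S : Finset G}
    (h : FolnerInv G K δ S) {g : G} (hg : g ∈ K) (f : G → ℝ) {M : ℝ} (hM : ∀ s, |f s| ≤ M) :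
    |∑ s ∈ S, f (g * s) - ∑ s ∈ S, f s| ≤ 2 * δ * S.card * M := by
  rw [folnerInv_iff] at h
  set T : Finset G := S.image (g * ·) with hT
  have hinj : Function.Injective (g * · : G → G) := mul_right_injective g
  have hTc : T.card = S.card := Finset.card_image_of_injective _ hinj
  have e1 : ∑ s ∈ S, f (g * s) = ∑ t ∈ T, f t := by
    rw [hT, Finset.sum_image (fun a _ b _ hab => hinj hab)]
  have hsub : (S.filter fun s => ∀ k ∈ K, k * s ∈ S).image (g * ·) ⊆ T ∩ S := by
    intro t ht
    simp only [Finset.mem_image, Finset.mem_filter] at ht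
    obtain ⟨s, ⟨hs, hk⟩, rfl⟩ := ht
    exact Finset.mem_inter.2 ⟨Finset.mem_image_of_mem _ hs, hk g hg⟩
  have hc := Finset.card_le_card hsub
  rw [Finset.card_image_of_injective _ hinj] at hc
  have hc' : (1 - δ) * (S.card : ℝ) ≤ (T ∩ S).card := h.trans (by exact_mod_cast hc)
  have h1 : (T \ S).card + (T ∩ S).card = S.card := by
    rw [← hTc]; exact Finset.card_sdiff_add_card_inter T S
  have h2 : (S \ T).card + (T ∩ S).card = S.card := by
    rw [Finset.inter_comm]; exact Finset.card_sdiff_add_card_inter S T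
  have h1' : ((T \ S).card : ℝ) ≤ δ * S.card := by
    have : ((T \ S).card : ℝ) + (T ∩ S).card = S.card := by exact_mod_cast h1
    linarith
  have h2' : ((S \ T).card : ℝ) ≤ δ * S.card := by
    have : ((S \ T).card : ℝ) + (T ∩ S).card = S.card := by exact_mod_cast h2
    linarith
  have hM0 : 0 ≤ M := (abs_nonneg _).trans (hM 1)
  have b : ∀ W : Finset G, |∑ t ∈ W, f t| ≤ W.card * M := fun W => by
    calc |∑ t ∈ W, f t| ≤ ∑ t ∈ W, |f t| := Finset.abs_sum_le_sum_abs _ _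
      _ ≤ ∑ t ∈ W, M := Finset.sum_le_sum fun t _ => hM t
      _ = W.card * M := by simp
  rw [e1, ← Finset.sum_sdiff_sub_sum_sdiff]
  calc _ ≤ |∑ t ∈ T \ S, f t| + |∑ t ∈ S \ T, f t| := abs_sub _ _
    _ ≤ (T \ S).card * M + (S \ T).card * M := add_le_add (b _) (b _)
    _ ≤ 2 * δ * S.card * M := by nlinarith

variable [BorelSpace X]

/-- Lower semicontinuity of the measure of an open set. -/
lemma eventually_lt_real {μ : ProbabilityMeasure X} {U : Set X} (hU : IsOpen U) {a : ℝ}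
    (h : a < (μ : Measure X).real U) :
    ∀ᶠ ν : ProbabilityMeasure X in 𝓝 μ, a < (ν : Measure X).real U := by
  have h1 : (0 : ENNReal) < ENNReal.ofReal ((μ : Measure X).real U - a) := by
    simpa using h
  filter_upwards [ProbabilityMeasure.toMeasure_add_pos_gt_mem_nhds μ hU h1] with ν hν
  have h2 := (ENNReal.toReal_lt_toReal (by finiteness) (by finiteness)).2 hν
  rw [ENNReal.toReal_add (by finiteness) (by finiteness), ENNReal.toReal_ofReal (by linarith)] at h2
  simp only [Measure.real] at *
  linarith

lemma eventually_real_lt {μ : ProbabilityMeasure X} {C : Set X} (hC : IsClosed C) {a : ℝ}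
    (h : (μ : Measure X).real C < a) :
    ∀ᶠ ν : ProbabilityMeasure X in 𝓝 μ, (ν : Measure X).real C < a := by
  have e : ∀ ν : ProbabilityMeasure X, (ν : Measure X).real Cᶜ = 1 - (ν : Measure X).real C :=
    fun ν => probReal_compl_eq_one_sub hC.measurableSet
  have := eventually_lt_real (μ := μ) hC.isOpen_compl (a := 1 - a) (by rw [e]; linarith)
  filter_upwards [this] with ν hν
  rw [e] at hν; linarith

lemma pm_real (μ : ProbabilityMeasure X) (A : Set X) : ((μ A : NNReal) : ℝ) = (μ : Measure X).real A := by
  rfl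

variable [CompactSpace X]

/-- integral of a continuous function depends continuously on the measure -/
lemma continuous_integral_pm (f : C(X, ℝ)) :
    Continuous fun μ : ProbabilityMeasure X => ∫ x, f x ∂(μ : Measure X) :=
  continuous_iff_continuousAt.2 fun μ => by
    have := (ProbabilityMeasure.tendsto_iff_forall_integral_tendsto (γ := ProbabilityMeasure X)
      (F := 𝓝 μ) (μs := id) (μ := μ)).1 tendsto_id (BoundedContinuousFunction.mkOfCompact f)
    simpa [ContinuousAt] using this

variable [ContinuousConstSMul G X]

/-- the translate of a continuous function -/
def transC (g : G) (f : C(X, ℝ)) : C(X, ℝ) := ⟨fun x => f (g • x), by fun_prop⟩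

@[simp] lemma transC_apply (g : G) (f : C(X, ℝ)) (x : X) : transC g f x = f (g • x) := rfl

lemma mem_MG_of_integral {μ : ProbabilityMeasure X}
    (h : ∀ (g : G) (f : C(X, ℝ)), ∫ x, f (g • x) ∂(μ : Measure X) = ∫ x, f x ∂(μ : Measure X)) :
    μ ∈ MG G X := by
  intro g
  have : IsProbabilityMeasure (Measure.map (fun x : X => g • x) (μ : Measure X)) :=
    Measure.isProbabilityMeasure_map (by fun_prop)
  refine ext_of_forall_integral_eq_of_IsFiniteMeasure fun f => ?_
  rw [integral_map (by fun_prop) (f.continuous.aestronglyMeasurable)]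
  exact h g f.toContinuousMap

lemma mem_MG_iff {μ : ProbabilityMeasure X} : μ ∈ MG G X ↔
    ∀ (g : G) (f : C(X, ℝ)), ∫ x, f (g • x) ∂(μ : Measure X) = ∫ x, f x ∂(μ : Measure X) := by
  refine ⟨fun h g f => ?_, mem_MG_of_integral⟩
  conv_rhs => rw [← h g]
  rw [integral_map (by fun_prop) (f.continuous.aestronglyMeasurable)]

lemma isClosed_MG : IsClosed (MG G X) := by
  have : MG G X = ⋂ (g : G) (f : C(X, ℝ)), {μ : ProbabilityMeasure X |
      ∫ x, (transC g f) x ∂(μ : Measure X) = ∫ x, f x ∂(μ : Measure X)} := by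
    ext μ; simp [mem_MG_iff]
  rw [this]
  exact isClosed_iInter fun g => isClosed_iInter fun f =>
    isClosed_eq (continuous_integral_pm _) (continuous_integral_pm _)

lemma smulInvariant_of_mem {μ : ProbabilityMeasure X} (h : μ ∈ MG G X) :
    SMulInvariantMeasure G X (μ : Measure X) := by
  refine ⟨fun g s hs => ?_⟩
  rw [← Measure.map_apply (by fun_prop) hs, h g]

lemma mem_MG_of_smulInvariant {μ : ProbabilityMeasure X} [SMulInvariantMeasure G X (μ : Measure X)] :
    μ ∈ MG G X := fun g => (measurePreserving_smul g (μ : Measure X)).map_eq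

end AFBasic

section AFEmp

open Filter Topology

set_option linter.unusedSectionVars false

variable {G X} [Group G] [MetricSpace X] [MeasurableSpace X] [MulAction G X] [BorelSpace X]
  [CompactSpace X] [ContinuousConstSMul G X]

/-- Empirical measure along `S • x`. -/
noncomputable def emp (S : Finset G) (x : X) : Measure X :=
  (S.card : ENNReal)⁻¹ • ∑ s ∈ S, Measure.dirac (s • x)

lemma isProb_emp {S : Finset G} (hS : S.Nonempty) (x : X) : IsProbabilityMeasure (emp S x) := by
  constructor
  simp only [emp, Measure.smul_apply, Measure.finsetSum_apply, measure_univ, Finset.sum_const,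
    nsmul_eq_mul, mul_one, smul_eq_mul]
  rw [ENNReal.inv_mul_cancel] <;> simp [hS.ne_empty]

lemma integral_emp {S : Finset G} (x : X) (f : C(X, ℝ)) :
    ∫ y, f y ∂(emp S x) = (S.card : ℝ)⁻¹ * ∑ s ∈ S, f (s • x) := by
  unfold emp
  rw [integral_smul_measure, integral_finsetSum_measure]
  · simp [integral_dirac]
  · intro s _
    exact integrable_dirac (by finiteness)

open Classical in
lemma real_emp {S : Finset G} (x : X) {A : Set X} (hA : MeasurableSet A) :
    (emp S x).real A = (S.card : ℝ)⁻¹ * (S.filter fun s => s • x ∈ A).card := by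
  unfold emp
  simp only [Measure.real, Measure.smul_apply, Measure.finsetSum_apply, smul_eq_mul,
    ENNReal.toReal_mul, Measure.dirac_apply' _ hA]
  simp [Set.indicator_apply]

open Classical in
lemma folner_compare [Countable G] {F O : Set X} (hF : IsClosed F) (hO : IsOpen O)
    (h : ∀ μ ∈ MG G X, μ F < μ O) : ∃ (K : Finset G) (δ : ℝ), 0 < δ ∧
      ∀ S : Finset G, S.Nonempty → FolnerInv G K δ S → ∀ x : X,
        ((S.filter fun s => s • x ∈ Metric.cthickening δ F).card : ℝ) + δ * S.card ≤
          (S.filter fun s => s • x ∈ (Metric.cthickening δ Oᶜ)ᶜ).card := by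
  by_contra hcon
  push Not at hcon
  obtain ⟨e, he⟩ := exists_surjective_nat G
  set K : ℕ → Finset G := fun n => (Finset.range n).image e with hK
  set δ : ℕ → ℝ := fun n => 1 / ((n : ℝ) + 1) with hδ
  have hδ0 : ∀ n, 0 < δ n := fun n => by positivity
  have hδlim : Tendsto δ atTop (𝓝 0) := tendsto_one_div_add_atTop_nhds_zero_nat
  choose S hSne hSF x hx using fun n => hcon (K n) (δ n) (hδ0 n)
  set ν : ℕ → ProbabilityMeasure X := fun n => ⟨emp (S n) (x n), isProb_emp (hSne n) (x n)⟩ with hν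
  set U : Ultrafilter ℕ := hyperfilter ℕ with hU
  have hUle : (U : Filter ℕ) ≤ atTop := by
    rw [hU, ← Nat.cofinite_eq_atTop]; exact hyperfilter_le_cofinite
  obtain ⟨μ, -, hμ⟩ := isCompact_univ.ultrafilter_le_nhds (U.map ν) (by simp)
  have hlim : Tendsto ν U (𝓝 μ) := hμ
  have hint : ∀ f : C(X, ℝ), Tendsto (fun n => ∫ y, f y ∂(ν n : Measure X)) U
      (𝓝 (∫ y, f y ∂(μ : Measure X))) := fun f =>
    ((continuous_integral_pm f).tendsto μ).comp hlim
  have hμM : μ ∈ MG G X := by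
    refine mem_MG_of_integral fun g f => ?_
    obtain ⟨k, rfl⟩ := he g
    have h1 := (hint (transC (e k) f)).sub (hint f)
    have h2 : Tendsto (fun n => ∫ y, (transC (e k) f) y ∂(ν n : Measure X) -
        ∫ y, f y ∂(ν n : Measure X)) U (𝓝 0) := by
      have h3 : Tendsto (fun n => 2 * δ n * ‖f‖) U (𝓝 0) := by
        have := ((hδlim.const_mul 2).mul_const ‖f‖).mono_left hUle
        simpa using this
      refine squeeze_zero_norm' ?_ h3
      have hk : ∀ᶠ n in (U : Filter ℕ), k < n := hUle (eventually_gt_atTop k)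
      filter_upwards [hk] with n hn
      have h4 := (hSF n).sum_le (g := e k)
        (by simp only [hK, Finset.mem_image, Finset.mem_range]; exact ⟨k, hn, rfl⟩)
        (fun s => f (s • x n)) (M := ‖f‖) (fun s => f.norm_coe_le_norm _)
      have hc : (0 : ℝ) < (S n).card := by exact_mod_cast (hSne n).card_pos
      simp only [hν, ProbabilityMeasure.coe_mk]
      rw [integral_emp, integral_emp, ← mul_sub, Real.norm_eq_abs, abs_mul, abs_of_pos (by positivity)]
      simp only [transC_apply, smul_smul]
      rw [inv_mul_le_iff₀ hc]
      calc _ ≤ _ := h4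
        _ = _ := by ring
    have := tendsto_nhds_unique h1 h2
    simpa [sub_eq_zero] using this
  have key : ∀ r : ℝ, 0 < r → 1 - (μ : Measure X).real (Metric.cthickening r Oᶜ) ≤
      (μ : Measure X).real (Metric.cthickening r F) + r := by
    intro r hr
    rw [← probReal_compl_eq_one_sub Metric.isClosed_cthickening.measurableSet]
    by_contra hlt
    push Not at hlt
    obtain ⟨a, ha1, ha2⟩ := exists_between hlt
    have e1 := hlim.eventually (eventually_lt_real (Metric.isClosed_cthickening.isOpen_compl) ha2)
    have e2 := hlim.eventually (eventually_real_lt (Metric.isClosed_cthickening)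
      (a := a - r) (by linarith : (μ : Measure X).real (Metric.cthickening r F) < a - r))
    have e3 : ∀ᶠ n in (U : Filter ℕ), δ n < r := hUle (hδlim.eventually_lt_const hr)
    obtain ⟨n, h1, h2, h3⟩ := (e1.and (e2.and e3)).exists
    have hc : (0 : ℝ) < (S n).card := by exact_mod_cast (hSne n).card_pos
    have h5 : (emp (S n) (x n)).real (Metric.cthickening (δ n) Oᶜ)ᶜ <
        (emp (S n) (x n)).real (Metric.cthickening (δ n) F) + δ n := by
      rw [real_emp _ Metric.isClosed_cthickening.measurableSet,
        real_emp _ Metric.isClosed_cthickening.measurableSet.compl, inv_mul_lt_iff₀ hc, mul_add,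
        mul_inv_cancel_left₀ hc.ne', mul_comm _ (δ n)]
      convert hx n
    simp only [hν, ProbabilityMeasure.coe_mk] at h1 h2
    have := isProb_emp (hSne n) (x n)
    have h6 : (emp (S n) (x n)).real (Metric.cthickening r Oᶜ)ᶜ ≤
        (emp (S n) (x n)).real (Metric.cthickening (δ n) Oᶜ)ᶜ :=
      measureReal_mono (compl_subset_compl.2 (Metric.cthickening_mono h3.le _)) (by finiteness)
    have h7 : (emp (S n) (x n)).real (Metric.cthickening (δ n) F) ≤
        (emp (S n) (x n)).real (Metric.cthickening r F) :=
      measureReal_mono (Metric.cthickening_mono h3.le _) (by finiteness)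
    linarith
  have lim : ∀ C : Set X, IsClosed C → Tendsto (fun r => (μ : Measure X).real (Metric.cthickening r C))
      (𝓝[>] 0) (𝓝 ((μ : Measure X).real C)) := fun C hC => by
    have := tendsto_measure_cthickening_of_isClosed (μ := (μ : Measure X)) (s := C)
      ⟨1, one_pos, by finiteness⟩ hC
    exact (ENNReal.tendsto_toReal (by finiteness)).comp (this.mono_left nhdsWithin_le_nhds)
  have hfin : 1 - (μ : Measure X).real Oᶜ ≤ (μ : Measure X).real F + 0 :=
    le_of_tendsto_of_tendsto ((lim _ hO.isClosed_compl).const_sub 1)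
      ((lim _ hF).add (tendsto_nhdsWithin_of_tendsto_nhds tendsto_id))
      (eventually_mem_nhdsWithin.mono fun r hr => key r hr)
  rw [probReal_compl_eq_one_sub hO.measurableSet] at hfin
  have := h μ hμM
  rw [← NNReal.coe_lt_coe, pm_real, pm_real] at this
  linarith

end AFEmp

section AFComp

open Filter Topology

set_option linter.unusedSectionVars false

lemma exists_injOn_finset {α β : Type*} [Nonempty β] (s : Finset α) (t : Finset β)
    (h : s.card ≤ t.card) : ∃ f : α → β, Set.InjOn f s ∧ ∀ a ∈ s, f a ∈ t := by
  classical
  have h' : Fintype.card s ≤ Fintype.card t := by simpa using h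
  obtain ⟨f⟩ := Function.Embedding.nonempty_of_card_le h'
  refine ⟨fun a => if ha : a ∈ s then (f ⟨a, ha⟩ : β) else Classical.arbitrary β, ?_, ?_⟩
  · intro a ha b hb hab
    simp only [Finset.mem_coe] at ha hb
    simp only [ha, hb, dif_pos] at hab
    have := f.injective (Subtype.ext hab)
    simpa using this
  · intro a ha
    simp [ha]

variable {G X} [Group G] [MetricSpace X] [MeasurableSpace X] [MulAction G X] [BorelSpace X]
  [CompactSpace X] [ContinuousConstSMul G X]

lemma subordinateM_of_finite {m : ℕ} {F O : Set X} {ι : Type*} [Finite ι] (U : ι → Set X)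
    (s : ι → G) (c : ι → Fin (m + 1)) (hU : ∀ k, IsOpen (U k)) (hF : F ⊆ ⋃ k, U k)
    (hs : ∀ k, s k • U k ⊆ O)
    (hd : ∀ k l, k ≠ l → c k = c l → Disjoint (s k • U k) (s l • U l)) :
    SubordinateM G X m F O := by
  obtain ⟨n, ⟨e⟩⟩ := Finite.exists_equiv_fin ι
  refine ⟨n, U ∘ e.symm, s ∘ e.symm, c ∘ e.symm, fun k => hU _, ?_, fun k => hs _, ?_⟩
  · intro x hx
    obtain ⟨k, hk⟩ := mem_iUnion.1 (hF hx)
    exact mem_iUnion.2 ⟨e k, by simpa using hk⟩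
  · intro k l hkl hc
    exact hd _ _ (fun h => hkl (e.symm.injective h)) hc

theorem comparison_of_mAlmostFinite [Countable G] {m : ℕ} (h : MAlmostFinite G X m) :
    HasMComparison G X m := by
  classical
  intro F O hF hO hFO
  obtain ⟨K, δ, hδ, hK⟩ := folner_compare hF hO hFO
  obtain ⟨n, hn⟩ := exists_nat_one_div_lt hδ
  obtain ⟨I, S, V, c, S', hV, hT, hFol, hdiam, hdisj, hS', hcard, hsub⟩ :=
    h (n + 1) (by omega) K δ hδ
  obtain ⟨N, U, g, c0, hU, hUc, hgU, hUd⟩ := hsub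
  set P : Fin I → Finset G := fun i => (S i).filter fun s => (s • V i ∩ F).Nonempty with hP
  set Q : Fin I → Finset G := fun i => (S i).filter fun s => s • V i ⊆ O with hQ
  have hbd : ∀ A : Set X, Bornology.IsBounded A := fun A => Metric.isBounded_of_compactSpace
  have hPQ : ∀ i, (P i).card + (S' i).card ≤ (Q i).card := by
    intro i
    rcases (V i).eq_empty_or_nonempty with h0 | ⟨x, hx⟩
    · have h1 : P i = ∅ := by simp [hP, h0]
      have h2 : Q i = S i := by simp [hQ, h0]
      rw [h1, h2]; simpa using Finset.card_le_card (hS' i)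
    rcases (S i).eq_empty_or_nonempty with h0 | hne
    · have h1 : P i = ∅ := by simp [hP, h0]
      have h2 : S' i = ∅ := by simpa [h0] using hS' i
      rw [h1, h2]; simp
    have h1 := hK (S i) hne (hFol i) x
    have hdist : ∀ s ∈ S i, ∀ y ∈ V i, dist (s • x) (s • y) < δ := by
      intro s hs y hy
      refine lt_of_le_of_lt (Metric.dist_le_diam_of_mem (hbd _) ?_ ?_) (hdiam i s hs)
      · exact smul_mem_smul_set (subset_closure hx)
      · exact smul_mem_smul_set (subset_closure hy)
    have h2 : P i ⊆ (S i).filter fun s => s • x ∈ Metric.cthickening δ F := by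
      intro s hs
      simp only [hP, Finset.mem_filter] at hs ⊢
      obtain ⟨hs, z, ⟨y, hy, rfl⟩, hz⟩ := hs
      exact ⟨hs, Metric.mem_cthickening_of_dist_le _ _ _ _ hz (hdist s hs y hy).le⟩
    have h3 : ((S i).filter fun s => s • x ∈ (Metric.cthickening δ Oᶜ)ᶜ) ⊆ Q i := by
      intro s hs
      simp only [hQ, Finset.mem_filter] at hs ⊢
      refine ⟨hs.1, ?_⟩
      rintro z ⟨y, hy, rfl⟩
      by_contra hz
      exact hs.2 (Metric.mem_cthickening_of_dist_le _ _ _ _ hz (hdist s hs.1 y hy).le)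
    have h2' : ((P i).card : ℝ) ≤ _ := Nat.cast_le.2 (Finset.card_le_card h2)
    have h3' : _ ≤ ((Q i).card : ℝ) := Nat.cast_le.2 (Finset.card_le_card h3)
    have h4 : ((S' i).card : ℝ) ≤ δ * (S i).card := by
      refine (hcard i).trans ?_
      rw [div_eq_inv_mul]
      refine mul_le_mul_of_nonneg_right ?_ (by positivity)
      push_cast
      rw [← one_div]; exact hn.le
    have : ((P i).card : ℝ) + (S' i).card ≤ (Q i).card := by linarith
    exact_mod_cast this
  have hφ : ∀ i, ∃ φ : G ⊕ G → G, Set.InjOn φ ((P i).disjSum (S' i)) ∧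
      ∀ a ∈ (P i).disjSum (S' i), φ a ∈ Q i := fun i =>
    exists_injOn_finset _ _ (by rw [Finset.card_disjSum]; exact hPQ i)
  choose φ hinj hmap using hφ
  have hmQ : ∀ i s, s ∈ Q i → s ∈ S i ∧ s • V i ⊆ O := fun i s hs => by
    simpa [hQ] using hs
  -- disjointness of levels
  have lev : ∀ i j s t, s ∈ S i → t ∈ S j → c i = c j → (i ≠ j ∨ s ≠ t) →
      Disjoint (s • V i) (t • V j) := by
    intro i j s t hs ht hc hne
    by_cases hij : i = j
    · subst hij
      exact (hT i hs ht (by simpa using hne)).mono (smul_set_mono subset_closure)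
        (smul_set_mono subset_closure)
    · refine (hdisj i j hij hc).mono ?_ ?_
      · rintro _ ⟨y, hy, rfl⟩; exact smul_mem_smul hs (subset_closure hy)
      · rintro _ ⟨y, hy, rfl⟩; exact smul_mem_smul ht (subset_closure hy)
  let A : Type _ := Σ i : Fin I, ↥(P i)
  let B : Type _ := Fin N × Σ i : Fin I, ↥(S' i)
  let UU : A ⊕ B → Set X := Sum.elim (fun a => (a.2 : G) • V a.1)
    (fun b => U b.1 ∩ (g b.1)⁻¹ • ((b.2.2 : G) • V b.2.1))
  let ss : A ⊕ B → G := Sum.elim (fun a => φ a.1 (Sum.inl a.2) * (a.2 : G)⁻¹)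
    (fun b => φ b.2.1 (Sum.inr b.2.2) * (b.2.2 : G)⁻¹ * g b.1)
  let idx : A ⊕ B → Fin I := Sum.elim (fun a => a.1) (fun b => b.2.1)
  let el : A ⊕ B → G ⊕ G := Sum.elim (fun a => Sum.inl (a.2 : G)) (fun b => Sum.inr (b.2.2 : G))
  have hel : ∀ k, el k ∈ (P (idx k)).disjSum (S' (idx k)) := by
    rintro (⟨i, s⟩ | ⟨k, i, s⟩)
    · exact Finset.inl_mem_disjSum.2 s.2
    · exact Finset.inr_mem_disjSum.2 s.2
  have himg : ∀ k, ss k • UU k ⊆ φ (idx k) (el k) • V (idx k) := by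
    rintro (⟨i, s⟩ | ⟨k, i, s⟩)
    · change (φ i (Sum.inl s) * (s : G)⁻¹) • ((s : G) • V i) ⊆ φ i (Sum.inl s) • V i
      rw [smul_smul]; simp
    · change (φ i (Sum.inr s) * (s : G)⁻¹ * g k) • (U k ∩ (g k)⁻¹ • ((s : G) • V i)) ⊆
        φ i (Sum.inr s) • V i
      refine (smul_set_mono inter_subset_right).trans ?_
      rw [smul_smul, smul_smul]; simp
  refine subordinateM_of_finite UU ss (fun k => c (idx k)) ?_ ?_ ?_ ?_
  · rintro (⟨i, s⟩ | ⟨k, i, s⟩)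
    · exact (hV i).smul _
    · exact (hU k).inter (((hV i).smul _).smul _)
  · intro x hx
    by_cases hxV : x ∈ ⋃ i, (S i : Set G) • V i
    · obtain ⟨i, hi⟩ := mem_iUnion.1 hxV
      obtain ⟨s, hs, y, hy, rfl⟩ := hi
      have : s ∈ P i := by
        simp only [hP, Finset.mem_filter]
        exact ⟨hs, _, ⟨y, hy, rfl⟩, hx⟩
      exact mem_iUnion.2 ⟨Sum.inl ⟨i, ⟨s, this⟩⟩, ⟨y, hy, rfl⟩⟩
    · obtain ⟨k, hk⟩ := mem_iUnion.1 (hUc ⟨mem_univ _, hxV⟩)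
      obtain ⟨i, hi⟩ := mem_iUnion.1 (hgU k (smul_mem_smul_set hk))
      obtain ⟨s, hs, y, hy, hxy⟩ := hi
      refine mem_iUnion.2 ⟨Sum.inr ⟨k, ⟨i, ⟨s, hs⟩⟩⟩, ⟨hk, ?_⟩⟩
      rw [mem_inv_smul_set_iff, ← hxy]
      exact smul_mem_smul_set hy
  · intro k
    exact (himg k).trans (hmQ _ _ (hmap _ _ (hel k))).2
  · intro k l hkl hc
    by_cases hne : idx k = idx l ∧ el k = el l
    · -- same level: both are remainder pieces
      rcases k with ⟨i, s⟩ | ⟨k, i, s⟩ <;> rcases l with ⟨j, t⟩ | ⟨l, j, t⟩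
      · exfalso
        obtain ⟨h1, h2⟩ := hne
        change i = j at h1
        subst h1
        have : s = t := Subtype.ext (Sum.inl_injective h2)
        exact hkl (by rw [this])
      · exact absurd hne.2 (by simp [el])
      · exact absurd hne.2 (by simp [el])
      · obtain ⟨h1, h2⟩ := hne
        change i = j at h1
        subst h1
        have : s = t := Subtype.ext (Sum.inr_injective h2)
        subst this
        have hkl' : k ≠ l := fun h => hkl (by rw [h])
        have hd := hUd k l hkl' (Fin.ext (by have := (c0 k).2; have := (c0 l).2; omega))
        have e : ∀ k, ss (Sum.inr ⟨k, ⟨i, s⟩⟩) • UU (Sum.inr ⟨k, ⟨i, s⟩⟩) ⊆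
            (φ i (Sum.inr s) * (s : G)⁻¹) • (g k • U k) := fun k => by
          rw [smul_smul]
          exact smul_set_mono inter_subset_left
        exact (disjoint_smul_set.2 hd).mono (e k) (e l)
    · refine (lev _ _ _ _ (hmQ _ _ (hmap _ _ (hel k))).1 (hmQ _ _ (hmap _ _ (hel l))).1 hc
        ?_).mono (himg k) (himg l)
      by_cases hi : idx k = idx l
      · right
        intro heq
        refine hne ⟨hi, ?_⟩
        have hk := hel k
        rw [hi] at hk heq
        exact hinj _ hk (hel l) heq
      · exact Or.inl hi

end AFComp

section AFTiling

open Filter Topology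

set_option linter.unusedSectionVars false

variable {G X} [Group G] [MetricSpace X] [MeasurableSpace X] [MulAction G X] [BorelSpace X]
  [CompactSpace X] [ContinuousConstSMul G X]

/-- `A` is the disjoint union of the levels of a Borel castle with `(K,δ)`-invariant shapes
and levels of diameter less than `δ`. -/
inductive Cas (K : Finset G) (δ : ℝ) : Set X → Prop
  | empty : Cas K δ ∅
  | add {A : Set X} {S : Finset G} {B : Set X} (hA : Cas K δ A) (hS : FolnerInv G K δ S)
      (hB : MeasurableSet B) (hT : IsTower G X S B) (hd : ∀ s ∈ S, Metric.diam (s • B) < δ)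
      (hdis : Disjoint ((S : Set G) • B) A) : Cas K δ (A ∪ (S : Set G) • B)

lemma smul_finset_eq (S : Finset G) (B : Set X) : (S : Set G) • B = ⋃ s ∈ S, s • B := by
  simp [← Set.iUnion_smul_set]

lemma measurableSet_smul_finset (S : Finset G) {B : Set X} (hB : MeasurableSet B) :
    MeasurableSet ((S : Set G) • B) := by
  rw [smul_finset_eq]
  exact Finset.measurableSet_biUnion _ fun s _ => hB.const_smul s

lemma Cas.measurableSet {K : Finset G} {δ : ℝ} {A : Set X} (h : Cas K δ A) : MeasurableSet A := by
  induction h with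
  | empty => exact MeasurableSet.empty
  | add hA hS hB hT hd hdis ih => exact ih.union (measurableSet_smul_finset _ hB)

variable {μ : Measure X} [IsProbabilityMeasure μ] [SMulInvariantMeasure G X μ]

lemma real_smul (g : G) (B : Set X) : μ.real (g • B) = μ.real B := by
  simp [Measure.real, measure_smul]

lemma real_preimage (g : G) (B : Set X) : μ.real ((fun x => g • x) ⁻¹' B) = μ.real B := by
  rw [preimage_smul, real_smul]

lemma real_tower {S : Finset G} {B : Set X} (hB : MeasurableSet B) (hT : IsTower G X S B) :
    μ.real ((S : Set G) • B) = S.card * μ.real B := by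
  rw [smul_finset_eq, measureReal_biUnion_finset hT (fun s _ => hB.const_smul s)]
  simp [real_smul]

lemma IsTower.mono {S T : Finset G} {B C : Set X} (h : IsTower G X T C) (hS : S ⊆ T) (hB : B ⊆ C) :
    IsTower G X S B := fun _ hs _ ht hne =>
  (h (hS hs) (hS ht) hne).mono (smul_set_mono hB) (smul_set_mono hB)

lemma diam_smul_mono (s : G) {B C : Set X} (h : B ⊆ C) : Metric.diam (s • B) ≤ Metric.diam (s • C) :=
  Metric.diam_mono (smul_set_mono h) Metric.isBounded_of_compactSpace

variable (μ) in
open Classical in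
lemma cas_step {K F : Finset G} {δ ε : ℝ} (hε1 : ε ≤ 1)
    (hF : ∀ S ⊆ F, (1 - ε) * F.card ≤ S.card → FolnerInv G K δ S) {A Y : Set X}
    (hA : Cas K δ A) (hY : MeasurableSet Y) (hT : IsTower G X F Y)
    (hd : ∀ s ∈ F, Metric.diam (s • Y) < δ) :
    ∃ B : Set X, MeasurableSet B ∧ Cas K δ (A ∪ (F : Set G) • B) ∧
      μ.real A + (1 - ε) * F.card * μ.real B ≤ μ.real (A ∪ (F : Set G) • B) ∧
      ∀ x ∈ Y, ε * F.card ≤ (F.filter fun s => s • x ∈ A ∪ (F : Set G) • B).card := by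
  set E : Finset G → Set X := fun S => {x | x ∈ Y ∧ ∀ s ∈ F, (s ∈ S ↔ s • x ∉ A)} with hE
  have hEm : ∀ S, MeasurableSet (E S) := by
    intro S
    have : E S = Y ∩ ⋂ s ∈ F, (if s ∈ S then (fun x => s • x) ⁻¹' Aᶜ else (fun x => s • x) ⁻¹' A) := by
      ext x
      simp only [hE, mem_ofPred_eq, mem_inter_iff, mem_iInter]
      refine and_congr_right fun _ => forall₂_congr fun s _ => ?_
      split_ifs with h <;> simp [h]
    rw [this]
    refine hY.inter (Finset.measurableSet_biInter _ fun s _ => ?_)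
    have hm : Measurable (fun x : X => s • x) := by fun_prop
    split_ifs
    · exact hm hA.measurableSet.compl
    · exact hm hA.measurableSet
  have hEY : ∀ S, E S ⊆ Y := fun S x hx => hx.1
  set L : Finset (Finset G) := F.powerset.filter fun S => (1 - ε) * F.card ≤ S.card with hL
  have main : ∀ T ⊆ L, Cas K δ (A ∪ ⋃ S ∈ T, (S : Set G) • E S) ∧
      μ.real A + (1 - ε) * F.card * ∑ S ∈ T, μ.real (E S) ≤
        μ.real (A ∪ ⋃ S ∈ T, (S : Set G) • E S) := by
    intro T
    induction T using Finset.induction_on with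
    | empty => intro _; simpa using hA
    | insert S T hST ih =>
      intro hTL
      obtain ⟨ih1, ih2⟩ := ih ((Finset.subset_insert _ _).trans hTL)
      have hSL := hTL (Finset.mem_insert_self S T)
      simp only [hL, Finset.mem_filter, Finset.mem_powerset] at hSL
      have hdisj : Disjoint ((S : Set G) • E S) (A ∪ ⋃ S ∈ T, (S : Set G) • E S) := by
        rw [Set.disjoint_left]
        rintro _ ⟨s, hs, x, hx, rfl⟩ (h | h)
        · exact (hx.2 s (hSL.1 hs)).1 hs h
        · simp only [mem_iUnion] at h
          obtain ⟨S', hS', t, ht, y, hy, hxy⟩ := h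
          have hS'L := hTL (Finset.mem_insert_of_mem hS')
          simp only [hL, Finset.mem_filter, Finset.mem_powerset] at hS'L
          have hst : s = t := by
            by_contra hne
            have := hT (hSL.1 hs) (hS'L.1 ht) hne
            exact Set.disjoint_left.1 this (smul_mem_smul_set hx.1)
              (by rw [← show t • y = s • x from hxy]; exact smul_mem_smul_set hy.1)
          subst hst
          have hxy' : y = x := smul_left_cancel _ hxy
          subst hxy'
          have : S = S' := by
            ext u
            by_cases hu : u ∈ F
            · exact (hx.2 u hu).trans (hy.2 u hu).symm
            · exact ⟨fun h => absurd (hSL.1 h) hu, fun h => absurd (hS'L.1 h) hu⟩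
          exact hST (this ▸ hS')
      have hTS : IsTower G X S (E S) := hT.mono hSL.1 (hEY S)
      have e : A ∪ ⋃ S' ∈ insert S T, (S' : Set G) • E S' =
          (A ∪ ⋃ S ∈ T, (S : Set G) • E S) ∪ (S : Set G) • E S := by
        rw [Finset.set_biUnion_insert, union_assoc, union_comm ((S : Set G) • E S)]
      rw [e]
      refine ⟨ih1.add (hF S hSL.1 hSL.2) (hEm S) hTS
        (fun s hs => (diam_smul_mono s (hEY S)).trans_lt (hd s (hSL.1 hs))) hdisj, ?_⟩
      rw [measureReal_union hdisj.symm (measurableSet_smul_finset _ (hEm S)), real_tower (hEm S) hTS,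
        Finset.sum_insert hST, mul_add]
      have : (1 - ε) * F.card * μ.real (E S) ≤ S.card * μ.real (E S) :=
        mul_le_mul_of_nonneg_right hSL.2 measureReal_nonneg
      linarith
  obtain ⟨m1, m2⟩ := main L subset_rfl
  set B : Set X := ⋃ S ∈ L, E S with hB
  have hBY : B ⊆ Y := by simp only [hB, iUnion_subset_iff]; exact fun S _ => hEY S
  have e : A ∪ ⋃ S ∈ L, (S : Set G) • E S = A ∪ (F : Set G) • B := by
    apply Subset.antisymm
    · refine union_subset_union_right _ (iUnion₂_subset fun S hS => ?_)
      have hS' := hS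
      simp only [hL, Finset.mem_filter, Finset.mem_powerset] at hS'
      exact Set.smul_subset_smul (by exact_mod_cast hS'.1) (subset_biUnion_of_mem (u := E) hS)
    · refine union_subset subset_union_left ?_
      rintro _ ⟨s, hs, x, hx, rfl⟩
      simp only [hB, mem_iUnion] at hx
      obtain ⟨S, hS, hx⟩ := hx
      by_cases hsA : s • x ∈ A
      · exact Or.inl hsA
      · exact Or.inr (mem_iUnion₂.2 ⟨S, hS, smul_mem_smul ((hx.2 s hs).2 hsA) hx⟩)
  rw [e] at m1 m2
  refine ⟨B, Finset.measurableSet_biUnion _ fun S _ => hEm S, m1, ?_, ?_⟩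
  · refine le_trans ?_ m2
    have : μ.real B ≤ ∑ S ∈ L, μ.real (E S) := measureReal_biUnion_finset_le _ _
    have h0 : 0 ≤ (1 - ε) * F.card := mul_nonneg (by linarith) (by positivity)
    have := mul_le_mul_of_nonneg_left this h0
    linarith
  · intro x hx
    by_cases hxB : x ∈ B
    · have : (F.filter fun s => s • x ∈ A ∪ (F : Set G) • B) = F :=
        Finset.filter_true_of_mem fun s hs => Or.inr (smul_mem_smul hs hxB)
      rw [this]
      have : (0 : ℝ) ≤ F.card := by positivity
      nlinarith
    · set S := F.filter fun s => s • x ∉ A with hS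
      have h1 : S ∉ L := by
        intro hSL
        refine hxB (mem_iUnion₂.2 ⟨S, hSL, hx, fun s hs => ?_⟩)
        simp [hS, hs]
      have h2 : (S.card : ℝ) < (1 - ε) * F.card := by
        by_contra h
        exact h1 (Finset.mem_filter.2 ⟨Finset.mem_powerset.2 (Finset.filter_subset _ _), not_lt.1 h⟩)
      have h3 : (F.filter fun s => s • x ∈ A).card + S.card = F.card :=
        Finset.card_filter_add_card_filter_not _
      have h3' : ((F.filter fun s => s • x ∈ A).card : ℝ) + S.card = F.card := by exact_mod_cast h3
      have h4 : ((F.filter fun s => s • x ∈ A).card : ℝ) ≤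
          (F.filter fun s => s • x ∈ A ∪ (F : Set G) • B).card :=
        Nat.cast_le.2 (Finset.card_le_card fun s hs => by
          simp only [Finset.mem_filter] at hs ⊢
          exact ⟨hs.1, Or.inl hs.2⟩)
      linarith

variable (μ) in
open Classical in
lemma cas_multi {ι : Type*} {K F : Finset G} {δ ε : ℝ} (hε1 : ε ≤ 1)
    (hF : ∀ S ⊆ F, (1 - ε) * F.card ≤ S.card → FolnerInv G K δ S) {A : Set X} {Y : ι → Set X}
    (hA : Cas K δ A) (hY : ∀ i, MeasurableSet (Y i)) (hT : ∀ i, IsTower G X F (Y i))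
    (hd : ∀ i, ∀ s ∈ F, Metric.diam (s • Y i) < δ) (J : Finset ι) :
    ∃ B : Set X, MeasurableSet B ∧ Cas K δ (A ∪ (F : Set G) • B) ∧
      μ.real A + (1 - ε) * F.card * μ.real B ≤ μ.real (A ∪ (F : Set G) • B) ∧
      ∀ j ∈ J, ∀ x ∈ Y j, ε * F.card ≤ (F.filter fun s => s • x ∈ A ∪ (F : Set G) • B).card := by
  induction J using Finset.induction_on with
  | empty => exact ⟨∅, MeasurableSet.empty, by simpa using hA, by simp, by simp⟩
  | insert j J hj ih =>
    obtain ⟨B, hB, hC, hm, hx⟩ := ih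
    obtain ⟨B', hB', hC', hm', hx'⟩ := cas_step μ hε1 hF hC (hY j) (hT j) (hd j)
    have e : A ∪ (F : Set G) • (B ∪ B') = A ∪ (F : Set G) • B ∪ (F : Set G) • B' := by
      rw [Set.smul_union, union_assoc]
    refine ⟨B ∪ B', hB.union hB', ?_, ?_, ?_⟩
    · rw [e]; exact hC'
    · rw [e]
      have h0 : 0 ≤ (1 - ε) * F.card := mul_nonneg (by linarith) (by positivity)
      have := mul_le_mul_of_nonneg_left (measureReal_union_le (μ := μ) B B') h0
      linarith
    · intro i hi x hxi
      rcases Finset.mem_insert.1 hi with rfl | hi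
      · refine (hx' x hxi).trans (Nat.cast_le.2 (Finset.card_le_card fun s hs => ?_))
        simp only [Finset.mem_filter] at hs ⊢
        exact ⟨hs.1, e ▸ hs.2⟩
      · refine (hx i hi x hxi).trans (Nat.cast_le.2 (Finset.card_le_card fun s hs => ?_))
        simp only [Finset.mem_filter] at hs ⊢
        exact ⟨hs.1, e ▸ Or.inl hs.2⟩

lemma exists_cover (hfree : FreeAction G X) (F : Finset G) {δ : ℝ} (hδ : 0 < δ) :
    ∃ (J : Finset X) (Y : X → Set X), (∀ x, IsOpen (Y x)) ∧ (∀ x, IsTower G X F (Y x)) ∧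
      (∀ x, ∀ s ∈ F, Metric.diam (s • Y x) < δ) ∧ ∀ y, ∃ x ∈ J, y ∈ Y x := by
  have hρ : ∀ x : X, ∃ ρ : ℝ, 0 < ρ ∧ ρ < δ / 4 ∧
      ∀ s ∈ F, ∀ t ∈ F, s ≠ t → 2 * ρ ≤ dist (s • x) (t • x) := by
    intro x
    have h1 : ∀ᶠ ρ : ℝ in 𝓝[>] 0, 0 < ρ := eventually_mem_nhdsWithin
    have h2 : ∀ᶠ ρ : ℝ in 𝓝[>] 0, ρ < δ / 4 :=
      nhdsWithin_le_nhds (eventually_lt_nhds (by positivity))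
    have h3 : ∀ᶠ ρ : ℝ in 𝓝[>] 0, ∀ s ∈ F, ∀ t ∈ F, s ≠ t → 2 * ρ ≤ dist (s • x) (t • x) := by
      rw [Filter.eventually_all_finset]
      intro s _
      rw [Filter.eventually_all_finset]
      intro t _
      by_cases hst : s = t
      · simp [hst]
      have hne : s • x ≠ t • x := fun h => hst (by
        have := hfree (t⁻¹ * s) x (by rw [mul_smul, h, inv_smul_smul])
        exact (inv_mul_eq_one.1 this).symm)
      have : ∀ᶠ ρ : ℝ in 𝓝[>] 0, ρ < dist (s • x) (t • x) / 2 :=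
        nhdsWithin_le_nhds (eventually_lt_nhds (half_pos (dist_pos.2 hne)))
      filter_upwards [this] with ρ hρ _
      linarith
    obtain ⟨ρ, ha, hb, hc⟩ := (h1.and (h2.and h3)).exists
    exact ⟨ρ, ha, hb, hc⟩
  choose ρ hρ0 hρδ hρ using hρ
  set Y : X → Set X := fun x => ⋂ s ∈ F, (fun y => s • y) ⁻¹' Metric.ball (s • x) (ρ x) with hY
  have hYo : ∀ x, IsOpen (Y x) := fun x =>
    isOpen_biInter_finset fun s _ => Metric.isOpen_ball.preimage (by fun_prop)
  have hYx : ∀ x, x ∈ Y x := fun x => by simp [hY, hρ0]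
  have hYd : ∀ x, ∀ y ∈ Y x, ∀ s ∈ F, dist (s • y) (s • x) < ρ x := fun x y hy s hs => by
    simp only [hY, mem_iInter] at hy
    exact hy s hs
  obtain ⟨J, hJ⟩ := CompactSpace.elim_nhds_subcover Y fun x => (hYo x).mem_nhds (hYx x)
  refine ⟨J, Y, hYo, ?_, ?_, ?_⟩
  · intro x s hs t ht hne
    simp only [Finset.mem_coe] at hs ht
    rw [Set.disjoint_left]
    rintro _ ⟨y, hy, rfl⟩ ⟨z, hz, hyz⟩
    have h1 := hYd x y hy s hs
    have h2 := hYd x z hz t ht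
    have h3 := hρ x s hs t ht hne
    simp only at hyz
    rw [hyz] at h2
    have := dist_triangle_left (s • x) (t • x) (s • y)
    linarith
  · intro x s hs
    have : Metric.diam (s • Y x) ≤ 2 * ρ x := by
      refine Metric.diam_le_of_forall_dist_le (by linarith [hρ0 x]) ?_
      rintro _ ⟨y, hy, rfl⟩ _ ⟨z, hz, rfl⟩
      have h1 := hYd x y hy s hs
      have h2 := hYd x z hz s hs
      have := dist_triangle_right (s • y) (s • z) (s • x)
      simp only
      linarith
    linarith [hρδ x]
  · intro y
    have := hJ.ge (mem_univ y)
    simpa using this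

end AFTiling

section AFTiling2

open Filter Topology

set_option linter.unusedSectionVars false

variable {G X} [Group G] [MetricSpace X] [MeasurableSpace X] [MulAction G X] [BorelSpace X]
  [CompactSpace X] [ContinuousConstSMul G X]

lemma folner_sub {K F S : Finset G} {δ ε : ℝ} (hF : FolnerInv G K (δ / 2) F)
    (hε : (K.card + 1) * ε ≤ δ / 2) (hS : S ⊆ F) (hc : (1 - ε) * F.card ≤ S.card) :
    FolnerInv G K δ S := by
  classical
  by_cases hδ1 : 1 < δ
  · unfold FolnerInv
    have : (0 : ℝ) ≤ S.card := by positivity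
    have h2 : (0 : ℝ) ≤ ({s | s ∈ S ∧ ∀ k ∈ K, k * s ∈ S} : Set G).ncard := by positivity
    nlinarith
  rw [folnerInv_iff] at hF ⊢
  set D := F \ S with hD
  have hDc : (D.card : ℝ) ≤ ε * F.card := by
    have : D.card + S.card = F.card := Finset.card_sdiff_add_card_eq_card hS
    have : (D.card : ℝ) + S.card = F.card := by exact_mod_cast this
    linarith
  have hsub : (F.filter fun s => ∀ k ∈ K, k * s ∈ F) ⊆
      (S.filter fun s => ∀ k ∈ K, k * s ∈ S) ∪
        (D ∪ K.biUnion fun k => D.image fun d => k⁻¹ * d) := by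
    intro s hs
    simp only [Finset.mem_filter] at hs
    by_cases h1 : s ∈ S
    · by_cases h2 : ∀ k ∈ K, k * s ∈ S
      · exact Finset.mem_union_left _ (Finset.mem_filter.2 ⟨h1, h2⟩)
      · push Not at h2
        obtain ⟨k, hk, hks⟩ := h2
        refine Finset.mem_union_right _ (Finset.mem_union_right _ (Finset.mem_biUnion.2 ⟨k, hk, ?_⟩))
        exact Finset.mem_image.2 ⟨k * s, Finset.mem_sdiff.2 ⟨hs.2 k hk, hks⟩, by simp⟩
    · exact Finset.mem_union_right _ (Finset.mem_union_left _ (Finset.mem_sdiff.2 ⟨hs.1, h1⟩))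
  have h1 := (Finset.card_le_card hsub).trans (Finset.card_union_le _ _)
  have h2 : (D ∪ K.biUnion fun k => D.image fun d => k⁻¹ * d).card ≤ D.card + K.card * D.card :=
    (Finset.card_union_le _ _).trans (Nat.add_le_add_left
      (Finset.card_biUnion_le_card_mul _ _ _ fun k _ => Finset.card_image_le) _)
  have h3 : ((F.filter fun s => ∀ k ∈ K, k * s ∈ F).card : ℝ) ≤
      (S.filter fun s => ∀ k ∈ K, k * s ∈ S).card + (D.card + K.card * D.card) := by
    exact_mod_cast h1.trans (Nat.add_le_add_left h2 _)
  have h4 : (S.card : ℝ) ≤ F.card := by exact_mod_cast Finset.card_le_card hS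
  have h5 : (D.card : ℝ) + K.card * D.card ≤ δ / 2 * F.card := by
    calc (D.card : ℝ) + K.card * D.card = (K.card + 1) * D.card := by ring
      _ ≤ (K.card + 1) * (ε * F.card) := mul_le_mul_of_nonneg_left hDc (by positivity)
      _ = ((K.card + 1) * ε) * F.card := by ring
      _ ≤ _ := mul_le_mul_of_nonneg_right hε (by positivity)
  have h6 : (1 - δ) * S.card ≤ (1 - δ) * (F.card : ℝ) :=
    mul_le_mul_of_nonneg_left h4 (by linarith)
  linarith

variable (μ : Measure X) [IsProbabilityMeasure μ] [SMulInvariantMeasure G X μ]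

/-- quasi-tiling up to `c` with small boundary -/
def QT (K : Finset G) (δ : ℝ) (c : ℝ) : Prop :=
  ∀ (F : Finset G) (η : ℝ), 0 < η → ∃ A : Set X, Cas K δ A ∧ μ.real Aᶜ ≤ c ∧
    ∀ s ∈ F, μ.real (A ∩ (fun x => s • x) ⁻¹' Aᶜ) ≤ η

lemma QT_one (K : Finset G) (δ : ℝ) : QT μ K δ 1 := fun F η hη =>
  ⟨∅, Cas.empty, by simp, by simp [hη.le]⟩

lemma QT_step (hG : AmenableGroup G) (hfree : FreeAction G X) {K : Finset G} {δ c γ ε : ℝ}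
    (hδ : 0 < δ) (hγ : 0 < γ) (hε0 : 0 < ε) (hε1 : ε ≤ 1 / 2) (hε : (K.card + 1) * ε ≤ δ / 2)
    (h : QT μ K δ c) : QT μ K δ ((1 - ε) * c + γ) := by
  classical
  intro F' η' hη'
  obtain ⟨F, hFne, hF⟩ := hG (K ∪ F') (min (δ / 2) (η' / 4)) (by positivity)
  have hFc : (0 : ℝ) < F.card := by exact_mod_cast hFne.card_pos
  obtain ⟨A, hA, hAc, hAb⟩ := h (F ∪ F') (min (η' / 2) (γ / F.card)) (by positivity)
  obtain ⟨J, Y, hYo, hYT, hYd, hYc⟩ := exists_cover hfree F hδ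
  obtain ⟨B, hB, hC, hm, hx⟩ := cas_multi μ (K := K) (F := F) (δ := δ) (ε := ε) (by linarith)
    (fun S hS hc => folner_sub (hF.mono Finset.subset_union_left (min_le_left _ _)) hε hS hc) hA
    (fun x => (hYo x).measurableSet) hYT hYd J
  have hAm := hA.measurableSet
  have hCm := hC.measurableSet
  set A' := A ∪ (F : Set G) • B with hA'
  have hsm : ∀ s : G, Measurable (fun x : X => s • x) := fun s => by fun_prop
  refine ⟨A', hC, ?_, ?_⟩
  · set N := A' \ A with hN
    have hNm : MeasurableSet N := hCm.diff hAm
    have hNr : μ.real A' = μ.real A + μ.real N := by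
      rw [hN, measureReal_sdiff subset_union_left hAm]; ring
    set E : Set X := Aᶜ ∩ ⋂ t ∈ F, (fun x => t • x) ⁻¹' Aᶜ with hE
    have hEm : MeasurableSet E := hAm.compl.inter
      (Finset.measurableSet_biInter _ fun t _ => hsm t hAm.compl)
    have key : ε * F.card * μ.real E ≤ F.card * μ.real N := by
      have e1 : ∫ x, E.indicator (fun _ => ε * F.card) x ∂μ = ε * F.card * μ.real E := by
        rw [integral_indicator hEm]; simp [mul_comm]
      have e2 : ∫ x, ∑ t ∈ F, ((fun x => t • x) ⁻¹' N).indicator (fun _ => (1 : ℝ)) x ∂μ =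
          F.card * μ.real N := by
        rw [integral_finsetSum]
        · rw [← nsmul_eq_mul, ← Finset.sum_const]
          refine Finset.sum_congr rfl fun t _ => ?_
          rw [integral_indicator (hsm t hNm)]
          simp [real_preimage]
        · intro t _
          exact (integrable_const 1).indicator (hsm t hNm)
      rw [← e1, ← e2]
      refine integral_mono ((integrable_const _).indicator hEm)
        (integrable_finsetSum _ fun t _ => (integrable_const 1).indicator (hsm t hNm)) fun x => ?_
      by_cases hxE : x ∈ E
      · simp only [indicator_of_mem hxE]
        obtain ⟨j, hj, hxj⟩ := hYc x
        refine (hx j hj x hxj).trans ?_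
        rw [Finset.card_filter]
        push_cast
        refine Finset.sum_le_sum fun t ht => ?_
        have : t • x ∉ A := by
          have := hxE.2
          simp only [mem_iInter] at this
          exact this t ht
        by_cases h : t • x ∈ A'
        · have h' : t • x ∈ N := ⟨h, this⟩
          rw [indicator_of_mem (show x ∈ (fun x => t • x) ⁻¹' N from h')]
          split_ifs <;> simp
        · rw [if_neg (show ¬ (t • x ∈ A ∪ (F : Set G) • B) from h)]
          exact indicator_nonneg (by simp) _
      · simp only [indicator_of_notMem hxE]
        exact Finset.sum_nonneg fun t _ => indicator_nonneg (by simp) _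
    have key' : ε * μ.real E ≤ μ.real N := by
      have : F.card * (ε * μ.real E) ≤ F.card * μ.real N := by linarith
      exact le_of_mul_le_mul_left this hFc
    have hEA : μ.real Aᶜ ≤ μ.real E + γ := by
      have hsub : Aᶜ ⊆ E ∪ ⋃ t ∈ F, (Aᶜ ∩ (fun x => t • x) ⁻¹' A) := by
        intro x hxA
        by_cases hxE : x ∈ E
        · exact Or.inl hxE
        · right
          simp only [hE, mem_inter_iff, hxA, true_and, mem_iInter, not_forall] at hxE
          obtain ⟨t, ht, h⟩ := hxE
          exact mem_iUnion₂.2 ⟨t, ht, hxA, by simpa using h⟩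
      have h1 := (measureReal_mono (μ := μ) hsub).trans (measureReal_union_le _ _)
      have h2 : μ.real (⋃ t ∈ F, (Aᶜ ∩ (fun x => t • x) ⁻¹' A)) ≤ ∑ t ∈ F, γ / F.card := by
        refine (measureReal_biUnion_finset_le _ _).trans (Finset.sum_le_sum fun t ht => ?_)
        have h3 := (hAb t (Finset.mem_union_left _ ht)).trans (min_le_right _ _)
        refine le_trans (le_of_eq ?_) h3
        have a1 := measureReal_inter_add_sdiff (μ := μ) (s := Aᶜ) (hsm t hAm)
        have a2 := measureReal_inter_add_sdiff (μ := μ) (s := (fun x => t • x) ⁻¹' Aᶜ) hAm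
        rw [real_preimage] at a2
        have a3 : (fun x : X => t • x) ⁻¹' Aᶜ \ A = Aᶜ \ (fun x : X => t • x) ⁻¹' A := by
          ext y; simp [and_comm]
        rw [a3, inter_comm] at a2
        linarith
      have h4 : ∑ t ∈ F, γ / F.card = γ := by
        rw [Finset.sum_const, nsmul_eq_mul]; field_simp
      linarith
    have c1 : μ.real A'ᶜ = 1 - μ.real A' := probReal_compl_eq_one_sub hCm
    have c2 : μ.real Aᶜ = 1 - μ.real A := probReal_compl_eq_one_sub hAm
    have : ε * (μ.real Aᶜ - γ) ≤ ε * μ.real E := mul_le_mul_of_nonneg_left (by linarith) hε0.le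
    nlinarith
  · intro s hs
    have hFB : F.card * μ.real B ≤ 2 := by
      have h1 : μ.real A' ≤ 1 := measureReal_le_one
      have h2 : 0 ≤ μ.real A := measureReal_nonneg
      have h3 : 0 ≤ F.card * μ.real B := by positivity
      nlinarith
    set T := F.filter fun t => s * t ∉ F with hT
    have hTc : (T.card : ℝ) ≤ η' / 4 * F.card := by
      have h1 := hF
      rw [folnerInv_iff] at h1
      have h2 : T.card + (F.filter fun t => ∀ k ∈ K ∪ F', k * t ∈ F).card ≤ F.card := by
        rw [← Finset.card_union_of_disjoint]
        · exact Finset.card_le_card (Finset.union_subset (Finset.filter_subset _ _)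
            (Finset.filter_subset _ _))
        · rw [Finset.disjoint_left]
          intro t ht ht'
          exact (Finset.mem_filter.1 ht).2 ((Finset.mem_filter.1 ht').2 s
            (Finset.mem_union_right _ hs))
      have h3 : (T.card : ℝ) + (F.filter fun t => ∀ k ∈ K ∪ F', k * t ∈ F).card ≤ F.card := by
        exact_mod_cast h2
      have h4 : min (δ / 2) (η' / 4) * F.card ≤ η' / 4 * F.card :=
        mul_le_mul_of_nonneg_right (min_le_right _ _) hFc.le
      linarith
    have hsub : A' ∩ (fun x => s • x) ⁻¹' A'ᶜ ⊆
        (A ∩ (fun x => s • x) ⁻¹' Aᶜ) ∪ ⋃ t ∈ T, t • B := by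
      rintro x ⟨hxA', hsx⟩
      have hsx' : s • x ∉ A' := hsx
      rcases hxA' with hxA | hxB
      · exact Or.inl ⟨hxA, fun h => hsx' (Or.inl h)⟩
      · right
        obtain ⟨t, ht, b, hb, rfl⟩ := hxB
        refine mem_iUnion₂.2 ⟨t, Finset.mem_filter.2 ⟨ht, fun hst => hsx' (Or.inr ?_)⟩,
          smul_mem_smul_set hb⟩
        change s • t • b ∈ _
        rw [smul_smul]
        exact smul_mem_smul (Finset.mem_coe.2 hst) hb
    have h1 := (measureReal_mono (μ := μ) hsub).trans (measureReal_union_le _ _)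
    have h2 := (hAb s (Finset.mem_union_right _ hs)).trans (min_le_left _ _)
    have h3 : μ.real (⋃ t ∈ T, t • B) ≤ T.card * μ.real B := by
      refine (measureReal_biUnion_finset_le _ _).trans (le_of_eq ?_)
      simp [real_smul]
    have h4 : T.card * μ.real B ≤ η' / 4 * F.card * μ.real B :=
      mul_le_mul_of_nonneg_right hTc measureReal_nonneg
    have h5 : η' / 4 * (F.card * μ.real B) ≤ η' / 4 * 2 := mul_le_mul_of_nonneg_left hFB (by positivity)
    linarith

theorem exists_cas (hG : AmenableGroup G) (hfree : FreeAction G X) (K : Finset G) {δ : ℝ}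
    (hδ : 0 < δ) {ε₀ : ℝ} (hε₀ : 0 < ε₀) : ∃ A : Set X, Cas K δ A ∧ 1 - ε₀ < μ.real A := by
  set ε : ℝ := min (1 / 2) (δ / (2 * (K.card + 1))) with hε
  have hε0 : 0 < ε := by positivity
  have hε1 : ε ≤ 1 / 2 := min_le_left _ _
  have hε2 : (K.card + 1) * ε ≤ δ / 2 := by
    calc (K.card + 1) * ε ≤ (K.card + 1) * (δ / (2 * (K.card + 1))) :=
          mul_le_mul_of_nonneg_left (min_le_right _ _) (by positivity)
      _ = δ / 2 := by field_simp
  have hn : ∀ n : ℕ, QT μ K δ ((1 - ε / 2) ^ n) := by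
    intro n
    induction n with
    | zero => simpa using QT_one μ K δ
    | succ n ih =>
      have := QT_step μ hG hfree (γ := ε / 2 * (1 - ε / 2) ^ n) hδ
        (mul_pos (by positivity) (pow_pos (by linarith) _)) hε0 hε1 hε2 ih
      convert this using 1
      ring
  obtain ⟨n, hn'⟩ := exists_pow_lt_of_lt_one hε₀ (show 1 - ε / 2 < 1 by linarith)
  obtain ⟨A, hA, hAc, -⟩ := hn n ∅ 1 one_pos
  refine ⟨A, hA, ?_⟩
  rw [probReal_compl_eq_one_sub hA.measurableSet] at hAc
  linarith

end AFTiling2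

section AFOpen

open Filter Topology

set_option linter.unusedSectionVars false

variable {G X} [Group G] [MetricSpace X] [MeasurableSpace X] [MulAction G X] [BorelSpace X]
  [CompactSpace X] [ContinuousConstSMul G X]

/-- An open castle with `(K,δ)`-invariant shapes and small levels. -/
structure OCas (K : Finset G) (δ : ℝ) {ι : Type} (S : ι → Finset G) (V : ι → Set X) : Prop where
  isOpen : ∀ i, IsOpen (V i)
  folner : ∀ i, FolnerInv G K δ (S i)
  tower : ∀ i, IsTower G X (S i) (closure (V i))
  diam : ∀ i, ∀ s ∈ S i, Metric.diam (s • closure (V i)) < δ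
  disj : ∀ i j, i ≠ j → Disjoint ((S i : Set G) • closure (V i)) ((S j : Set G) • closure (V j))

lemma compact_castle (μ : Measure X) [IsProbabilityMeasure μ] [SMulInvariantMeasure G X μ]
    {K : Finset G} {δ : ℝ} {A : Set X} (h : Cas K δ A) : ∀ ε : ℝ, 0 < ε →
    ∃ (ι : Type) (_ : Finite ι) (S : ι → Finset G) (C : ι → Set X), (∀ i, IsCompact (C i)) ∧
      (∀ i, FolnerInv G K δ (S i)) ∧ (∀ i, IsTower G X (S i) (C i)) ∧
      (∀ i, ∀ s ∈ S i, Metric.diam (s • C i) < δ) ∧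
      (∀ i j, i ≠ j → Disjoint ((S i : Set G) • C i) ((S j : Set G) • C j)) ∧
      (⋃ i, (S i : Set G) • C i) ⊆ A ∧ μ.real A ≤ μ.real (⋃ i, (S i : Set G) • C i) + ε := by
  induction h with
  | empty =>
    intro ε hε
    exact ⟨Empty, inferInstance, Empty.elim, Empty.elim, by simp, by simp, by simp, by simp, by simp,
      by simp, by simpa using hε.le⟩
  | @add A S B hA hS hB hT hd hdis ih =>
    intro ε hε
    obtain ⟨ι, hι, S₀, C₀, h1, h2, h3, h4, h5, h6, h7⟩ := ih (ε / 2) (by positivity)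
    obtain ⟨C, hCB, hC, hCμ⟩ := hB.exists_isCompact_lt_add (measure_ne_top μ B)
      (ε := ENNReal.ofReal (ε / 2 / (S.card + 1))) (by
        have : 0 < ε / 2 / (S.card + 1) := by positivity
        simpa using this)
    have hCμ' : μ.real B ≤ μ.real C + ε / 2 / (S.card + 1) := by
      have h2 := (ENNReal.toReal_le_toReal (by finiteness) (by finiteness)).2 hCμ.le
      rw [ENNReal.toReal_add (by finiteness) (by finiteness),
        ENNReal.toReal_ofReal (by positivity)] at h2
      exact h2
    have hTC := hT.mono (subset_refl S) hCB
    have hSC : (S : Set G) • C ⊆ (S : Set G) • B := Set.smul_subset_smul_left hCB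
    have hd0 : ∀ i, Disjoint ((S : Set G) • C) ((S₀ i : Set G) • C₀ i) := fun i =>
      hdis.mono hSC ((subset_iUnion (fun i => (S₀ i : Set G) • C₀ i) i).trans h6)
    refine ⟨Option ι, inferInstance, fun i => i.elim S S₀, fun i => i.elim C C₀, ?_, ?_, ?_, ?_, ?_,
      ?_, ?_⟩
    · rintro (_ | i); exacts [hC, h1 i]
    · rintro (_ | i); exacts [hS, h2 i]
    · rintro (_ | i); exacts [hTC, h3 i]
    · rintro (_ | i) s hs
      exacts [(diam_smul_mono s hCB).trans_lt (hd s hs), h4 i s hs]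
    · rintro (_ | i) (_ | j) hij
      · exact absurd rfl hij
      · exact hd0 j
      · exact (hd0 i).symm
      · exact h5 i j fun h => hij (by rw [h])
    · rw [iUnion_option]
      exact union_subset (hSC.trans subset_union_right) (h6.trans subset_union_left)
    · rw [iUnion_option]
      simp only [Option.elim]
      have hU : MeasurableSet (⋃ i, (S₀ i : Set G) • C₀ i) :=
        MeasurableSet.iUnion fun i => measurableSet_smul_finset _ (h1 i).measurableSet
      rw [measureReal_union hdis.symm (measurableSet_smul_finset _ hB), real_tower hB hT,
        measureReal_union (disjoint_iUnion_right.2 hd0) hU, real_tower hC.measurableSet hTC]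
      have h8 := mul_le_mul_of_nonneg_left hCμ' (show (0 : ℝ) ≤ S.card by positivity)
      have h9 : (S.card : ℝ) * (ε / 2 / (S.card + 1)) ≤ ε / 2 := by
        rw [mul_div_assoc', div_le_iff₀ (by positivity)]
        nlinarith
      linarith

lemma open_castle {K : Finset G} {δ : ℝ} {ι : Type} [Finite ι] {S : ι → Finset G} {C : ι → Set X}
    (hC : ∀ i, IsCompact (C i)) (hS : ∀ i, FolnerInv G K δ (S i)) (hT : ∀ i, IsTower G X (S i) (C i))
    (hd : ∀ i, ∀ s ∈ S i, Metric.diam (s • C i) < δ)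
    (hdis : ∀ i j, i ≠ j → Disjoint ((S i : Set G) • C i) ((S j : Set G) • C j)) :
    ∃ V : ι → Set X, OCas K δ S V ∧ ∀ i, C i ⊆ V i := by
  set L : (Σ i, S i) → Set X := fun p => (p.2 : G) • C p.1 with hL
  have hLc : ∀ p, IsCompact (L p) := fun p => (hC p.1).smul _
  have hLd : ∀ p q, p ≠ q → Disjoint (L p) (L q) := by
    rintro ⟨i, s, hs⟩ ⟨j, t, ht⟩ hne
    by_cases hij : i = j
    · subst hij
      refine hT i hs ht fun h => hne ?_
      subst h; rfl
    · exact (hdis i j hij).mono (Set.smul_set_subset_smul hs) (Set.smul_set_subset_smul ht)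
  have e0 : ∀ᶠ r : ℝ in 𝓝[>] 0, 0 < r := eventually_mem_nhdsWithin
  have e1 : ∀ᶠ r : ℝ in 𝓝[>] 0, ∀ p q, p ≠ q →
      Disjoint (Metric.cthickening r (L p)) (Metric.cthickening r (L q)) := by
    rw [eventually_all]
    intro p
    rw [eventually_all]
    intro q
    by_cases hpq : p = q
    · simp [hpq]
    obtain ⟨r₀, hr₀, h⟩ := (hLd p q hpq).exists_cthickenings (hLc p) (hLc q).isClosed
    have : ∀ᶠ r : ℝ in 𝓝[>] 0, r < r₀ := nhdsWithin_le_nhds (eventually_lt_nhds hr₀)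
    filter_upwards [this] with r hr _
    exact h.mono (Metric.cthickening_mono hr.le _) (Metric.cthickening_mono hr.le _)
  have e2 : ∀ᶠ r : ℝ in 𝓝[>] 0, ∀ p, Metric.diam (Metric.cthickening r (L p)) < δ := by
    rw [eventually_all]
    intro p
    have h := hd p.1 p.2 p.2.2
    have : ∀ᶠ r : ℝ in 𝓝[>] 0, r < (δ - Metric.diam (L p)) / 2 :=
      nhdsWithin_le_nhds (eventually_lt_nhds (by simp only [hL]; linarith))
    filter_upwards [this, e0] with r hr hr0
    have := Metric.diam_cthickening_le (L p) hr0.le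
    linarith
  obtain ⟨r, hr0, hr1, hr2⟩ := (e0.and (e1.and e2)).exists
  set V : ι → Set X := fun i => ⋂ s ∈ S i, (fun x => s • x) ⁻¹' Metric.thickening r (s • C i) with hV
  have hcl : ∀ i, ∀ s (hs : s ∈ S i), s • closure (V i) ⊆ Metric.cthickening r (L ⟨i, s, hs⟩) := by
    intro i s hs
    have h1 : V i ⊆ (fun x => s • x) ⁻¹' Metric.cthickening r (s • C i) := fun x hx => by
      simp only [hV, mem_iInter] at hx
      exact Metric.thickening_subset_cthickening _ _ (hx s hs)
    have h2 := closure_minimal h1 (Metric.isClosed_cthickening.preimage (by fun_prop))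
    rintro _ ⟨x, hx, rfl⟩
    exact h2 hx
  refine ⟨V, ⟨?_, hS, ?_, ?_, ?_⟩, ?_⟩
  · exact fun i => isOpen_biInter_finset fun s _ => Metric.isOpen_thickening.preimage (by fun_prop)
  · intro i s hs t ht hne
    exact (hr1 ⟨i, s, hs⟩ ⟨i, t, ht⟩ (by simpa using hne)).mono (hcl i s hs) (hcl i t ht)
  · intro i s hs
    exact (Metric.diam_mono (hcl i s hs) Metric.isBounded_of_compactSpace).trans_lt (hr2 _)
  · intro i j hij
    rw [smul_finset_eq, smul_finset_eq]
    simp only [disjoint_iUnion_left, disjoint_iUnion_right]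
    intro t ht s hs
    exact (hr1 ⟨i, s, hs⟩ ⟨j, t, ht⟩ (by intro h; exact hij (congrArg Sigma.fst h))).mono (hcl i s hs) (hcl j t ht)
  · intro i x hx
    simp only [hV, mem_iInter]
    intro s _
    exact Metric.self_subset_thickening hr0 _ (smul_mem_smul_set hx)

theorem exists_ocas (hG : AmenableGroup G) (hfree : FreeAction G X) (K : Finset G) {δ : ℝ}
    (hδ : 0 < δ) {ε : ℝ} (hε : 0 < ε) (μ : Measure X) [IsProbabilityMeasure μ]
    [SMulInvariantMeasure G X μ] :
    ∃ (ι : Type) (_ : Finite ι) (S : ι → Finset G) (V : ι → Set X), OCas K δ S V ∧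
      1 - ε < μ.real (⋃ i, (S i : Set G) • V i) := by
  obtain ⟨A, hA, hAμ⟩ := exists_cas μ hG hfree K hδ (half_pos hε)
  obtain ⟨ι, hι, S, C, h1, h2, h3, h4, h5, h6, h7⟩ := compact_castle μ hA (ε / 2) (half_pos hε)
  obtain ⟨V, hV, hCV⟩ := open_castle h1 h2 h3 h4 h5
  refine ⟨ι, hι, S, V, hV, ?_⟩
  have : μ.real (⋃ i, (S i : Set G) • C i) ≤ μ.real (⋃ i, (S i : Set G) • V i) :=
    measureReal_mono (iUnion_mono fun i => Set.smul_subset_smul_left (hCV i))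
  linarith

end AFOpen

section AFErgodic

open Filter Topology

set_option linter.unusedSectionVars false

variable {G X} [Group G] [MetricSpace X] [MeasurableSpace X] [MulAction G X] [BorelSpace X]
  [CompactSpace X] [ContinuousConstSMul G X]

lemma integrable_cont (μ : Measure X) [IsProbabilityMeasure μ] {f : X → ℝ} (hf : Continuous f) :
    Integrable f μ :=
  hf.integrable_of_hasCompactSupport (HasCompactSupport.of_compactSpace f)

lemma EG_subset_MG : EG G X ⊆ MG G X := fun _ h => h.1

lemma EG_zero_one [Countable G] {μ : ProbabilityMeasure X} (hμ : μ ∈ EG G X) {s : Set X}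
    (hs : MeasurableSet s) (h : ∀ g : G, (fun x => g • x) ⁻¹' s =ᵐ[(μ : Measure X)] s) :
    (∀ᵐ x ∂(μ : Measure X), x ∈ s) ∨ ∀ᵐ x ∂(μ : Measure X), x ∉ s := by
  set A : Set X := ⋂ g : G, (fun x => g • x) ⁻¹' s with hA
  have hAm : MeasurableSet A := MeasurableSet.iInter fun g =>
    (show Measurable fun x : X => g • x by fun_prop) hs
  have hAs : A =ᵐ[(μ : Measure X)] s := by
    have := Filter.EventuallyEq.countable_iInter h
    rwa [iInter_const] at this
  have hmem : ∀ (g : G) (x : X), x ∈ A → g • x ∈ A := by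
    intro g x hx
    simp only [hA, mem_iInter, mem_preimage] at hx ⊢
    intro k
    rw [smul_smul]; exact hx _
  have hinv : ∀ g : G, g • A = A := by
    intro g
    ext x
    rw [mem_smul_set_iff_inv_smul_mem]
    exact ⟨fun hx => by simpa using hmem g _ hx, hmem _ _⟩
  rcases hμ.2 A hAm hinv with h0 | h1
  · right
    have h0' : (μ : Measure X) A = 0 := by
      rw [← ProbabilityMeasure.ennreal_coeFn_eq_coeFn_toMeasure, h0]; rfl
    rw [measure_congr hAs] at h0'
    exact measure_eq_zero_iff_ae_notMem.1 h0'
  · left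
    have h1' : (μ : Measure X) A = 1 := by
      rw [← ProbabilityMeasure.ennreal_coeFn_eq_coeFn_toMeasure, h1]; rfl
    rw [measure_congr hAs] at h1'
    exact (mem_ae_iff_prob_eq_one hs).2 h1'

lemma EG_const [Countable G] {μ : ProbabilityMeasure X} (hμ : μ ∈ EG G X) {h : X → ℝ}
    (hm : Measurable h) (hh : ∀ g : G, (fun x => h (g • x)) =ᵐ[(μ : Measure X)] h) :
    ∃ c : ℝ, h =ᵐ[(μ : Measure X)] fun _ => c := by
  refine exists_eventuallyEq_const_of_forall_separating MeasurableSet fun U hU => ?_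
  refine EG_zero_one hμ (hm hU) fun g => ?_
  filter_upwards [hh g] with x hx
  apply propext
  change h (g • x) ∈ U ↔ h x ∈ U
  rw [hx]

/-- Translation as a linear map. -/
def transL (g : G) : C(X, ℝ) →ₗ[ℝ] C(X, ℝ) where
  toFun := transC g
  map_add' _ _ := rfl
  map_smul' _ _ := rfl

/-- The orbit of `f`. -/
def orb (G : Type*) {X : Type*} [Group G] [MetricSpace X] [MulAction G X] [CompactSpace X]
    [ContinuousConstSMul G X] (f : C(X, ℝ)) : Set C(X, ℝ) := range fun g : G => transC g f

lemma transL_orb (g : G) (f : C(X, ℝ)) : transL g '' convexHull ℝ (orb G f) ⊆ convexHull ℝ (orb G f) := by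
  rw [LinearMap.image_convexHull]
  refine convexHull_mono ?_
  rintro _ ⟨_, ⟨h, rfl⟩, rfl⟩
  refine ⟨h * g, ?_⟩
  ext x
  change f ((h * g) • x) = f (h • g • x)
  rw [mul_smul]

lemma integral_hull {μ : ProbabilityMeasure X} (hμ : μ ∈ MG G X) (f : C(X, ℝ)) {p : C(X, ℝ)}
    (hp : p ∈ convexHull ℝ (orb G f)) :
    ∫ x, p x ∂(μ : Measure X) = ∫ x, f x ∂(μ : Measure X) := by
  have hconv : Convex ℝ {q : C(X, ℝ) | ∫ x, q x ∂(μ : Measure X) = ∫ x, f x ∂(μ : Measure X)} := by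
    intro q hq r hr a b ha hb hab
    simp only [mem_ofPred_eq] at hq hr ⊢
    simp only [ContinuousMap.add_apply, ContinuousMap.smul_apply, smul_eq_mul]
    rw [integral_add (integrable_cont _ (by fun_prop)) (integrable_cont _ (by fun_prop)),
      integral_const_mul, integral_const_mul, hq, hr, ← add_mul, hab, one_mul]
  refine convexHull_min ?_ hconv hp
  rintro _ ⟨g, rfl⟩
  exact mem_MG_iff.1 hμ g f

lemma exists_hull_approx [Countable G] {μ : ProbabilityMeasure X} (hμ : μ ∈ EG G X) (f : C(X, ℝ))
    {ε : ℝ} (hε : 0 < ε) : ∃ p ∈ convexHull ℝ (orb G f),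
      ∫ x, (p x - ∫ y, f y ∂(μ : Measure X)) ^ 2 ∂(μ : Measure X) < ε := by
  have hinv := smulInvariant_of_mem (EG_subset_MG hμ)
  set T : C(X, ℝ) →L[ℝ] Lp ℝ 2 (μ : Measure X) := ContinuousMap.toLp 2 (μ : Measure X) ℝ with hT
  set W : Set (Lp ℝ 2 (μ : Measure X)) := closure (T '' convexHull ℝ (orb G f)) with hW
  have hmp : ∀ g : G, MeasurePreserving (fun x : X => g • x) (μ : Measure X) (μ : Measure X) :=
    fun g => measurePreserving_smul g _
  have hWc : Convex ℝ W := ((convex_convexHull ℝ _).is_linear_image T.toLinearMap.isLinear).closure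
  have hWne : W.Nonempty := ⟨T (transC (1 : G) f), subset_closure
    ⟨_, subset_convexHull _ _ ⟨1, rfl⟩, rfl⟩⟩
  obtain ⟨v, hv, hmin⟩ := exists_norm_eq_iInf_of_complete_convex hWne isClosed_closure.isComplete
    hWc 0
  rw [norm_eq_iInf_iff_real_inner_le_zero hWc hv] at hmin
  have hUT : ∀ (g : G) (q : C(X, ℝ)), Lp.compMeasurePreserving _ (hmp g) (T q) = T (transC g q) := by
    intro g q
    rfl
  have hUW : ∀ (g : G), Lp.compMeasurePreserving _ (hmp g) v ∈ W := by
    intro g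
    have hc : Continuous (Lp.compMeasurePreserving (E := ℝ) (p := 2) _ (hmp g)) :=
      (Lp.isometry_compMeasurePreserving (hmp g)).continuous
    refine map_mem_closure hc hv ?_
    rintro _ ⟨q, hq, rfl⟩
    rw [hUT]
    exact ⟨_, transL_orb g f ⟨q, hq, rfl⟩, rfl⟩
  have hfix : ∀ g : G, Lp.compMeasurePreserving _ (hmp g) v = v := by
    intro g
    set w := Lp.compMeasurePreserving _ (hmp g) v with hw
    have h1 := hmin w (hUW g)
    have h2 : ‖w‖ = ‖v‖ := Lp.norm_compMeasurePreserving v (hmp g)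
    rw [zero_sub, inner_neg_left, inner_sub_right, real_inner_self_eq_norm_sq] at h1
    have h3 := norm_sub_sq_real v w
    rw [h2] at h3
    have h4 : ‖v - w‖ ^ 2 ≤ 0 := by linarith
    have h5 : ‖v - w‖ = 0 := by
      have := sq_nonneg ‖v - w‖
      exact pow_eq_zero_iff (two_ne_zero) |>.1 (le_antisymm h4 this)
    exact (sub_eq_zero.1 (norm_eq_zero.1 h5)).symm
  obtain ⟨v', hv'm, hv'⟩ := (Lp.aestronglyMeasurable v)
  obtain ⟨c, hc⟩ := EG_const hμ hv'm.measurable (fun g => by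
    have h1 := Lp.coeFn_compMeasurePreserving v (hmp g)
    rw [hfix g] at h1
    have h2 : v ∘ (fun x => g • x) =ᵐ[(μ : Measure X)] v' ∘ (fun x => g • x) :=
      (hmp g).quasiMeasurePreserving.ae_eq_comp hv'
    exact h2.symm.trans (h1.symm.trans hv'))
  have hvc : v =ᵐ[(μ : Measure X)] fun _ => c := hv'.trans hc
  obtain ⟨_, ⟨p, hp, rfl⟩, hpv⟩ := Metric.mem_closure_iff.1 hv (Real.sqrt ε) (Real.sqrt_pos.2 hε)
  refine ⟨p, hp, ?_⟩
  rw [dist_comm, dist_eq_norm] at hpv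
  have h1 : ‖T p - v‖ ^ 2 < ε := by
    have := pow_lt_pow_left₀ hpv (norm_nonneg _) two_ne_zero
    rwa [Real.sq_sqrt hε.le] at this
  have h2 : ‖T p - v‖ ^ 2 = ∫ x, (p x - c) ^ 2 ∂(μ : Measure X) := by
    rw [← real_inner_self_eq_norm_sq, L2.inner_def]
    refine integral_congr_ae ?_
    filter_upwards [Lp.coeFn_sub (T p) v, ContinuousMap.coeFn_toLp (𝕜 := ℝ) (p := 2) (μ : Measure X) p, hvc]
      with x h1 h2 h3
    rw [h1, Pi.sub_apply, h3, show (T p) x = p x from h2]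
    simp [sq]
  set m := ∫ y, f y ∂(μ : Measure X) with hm
  have h3 : ∫ x, p x ∂(μ : Measure X) = m := integral_hull (EG_subset_MG hμ) f hp
  have h4 : ∀ d : ℝ, ∫ x, (p x - d) ^ 2 ∂(μ : Measure X) =
      ∫ x, (p x) ^ 2 ∂(μ : Measure X) - 2 * d * m + d ^ 2 := by
    intro d
    have : ∀ x, (p x - d) ^ 2 = ((p x) ^ 2 - 2 * d * p x) + d ^ 2 := fun x => by ring
    simp_rw [this]
    rw [integral_add (integrable_cont _ (by fun_prop)) (integrable_const _),
      integral_sub (integrable_cont _ (by fun_prop)) (integrable_cont _ (by fun_prop)),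
      integral_const_mul, h3]
    simp
  rw [h2, h4] at h1
  rw [h4]
  nlinarith [sq_nonneg (c - m)]

/-- Averages over finite subsets of the group. -/
noncomputable def avg (F : Finset G) (f : C(X, ℝ)) : C(X, ℝ) :=
  (F.card : ℝ)⁻¹ • ∑ s ∈ F, transC s f

lemma avg_apply (F : Finset G) (f : C(X, ℝ)) (x : X) :
    avg F f x = (F.card : ℝ)⁻¹ * ∑ s ∈ F, f (s • x) := by
  simp [avg]

lemma avg_hull (f : C(X, ℝ)) {p : C(X, ℝ)} (hp : p ∈ convexHull ℝ (orb G f)) :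
    ∀ η : ℝ, 0 < η → ∃ (K : Finset G) (δ : ℝ), 0 < δ ∧ ∀ F : Finset G, F.Nonempty →
      FolnerInv G K δ F → ∀ x, |avg F p x - avg F f x| ≤ η := by
  classical
  have hconv : Convex ℝ {q : C(X, ℝ) | ∀ η : ℝ, 0 < η → ∃ (K : Finset G) (δ : ℝ), 0 < δ ∧
      ∀ F : Finset G, F.Nonempty → FolnerInv G K δ F → ∀ x, |avg F q x - avg F f x| ≤ η} := by
    intro q hq r hr a b ha hb hab η hη
    obtain ⟨K, δ, hδ, h⟩ := hq η hη
    obtain ⟨K', δ', hδ', h'⟩ := hr η hη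
    refine ⟨K ∪ K', min δ δ', lt_min hδ hδ', fun F hF hFF x => ?_⟩
    have h1 := h F hF (hFF.mono Finset.subset_union_left (min_le_left _ _)) x
    have h2 := h' F hF (hFF.mono Finset.subset_union_right (min_le_right _ _)) x
    have e : avg F (a • q + b • r) x = a * avg F q x + b * avg F r x := by
      simp only [avg_apply, ContinuousMap.add_apply, ContinuousMap.smul_apply, smul_eq_mul,
        Finset.sum_add_distrib, ← Finset.mul_sum]
      ring
    have e' : avg F f x = a * avg F f x + b * avg F f x := by rw [← add_mul, hab, one_mul]
    rw [e, e']
    rw [abs_le] at h1 h2 ⊢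
    constructor <;> nlinarith
  refine convexHull_min ?_ hconv hp
  rintro _ ⟨g, rfl⟩ η hη
  refine ⟨{g}, η / (2 * (‖f‖ + 1)), by positivity, fun F hF hFF x => ?_⟩
  have h1 := hFF.sum_le (Finset.mem_singleton_self g) (fun s => f (s • x)) (M := ‖f‖)
    (fun s => f.norm_coe_le_norm _)
  have hc : (0 : ℝ) < F.card := by exact_mod_cast hF.card_pos
  simp only [avg_apply, transC_apply]
  rw [← mul_sub, abs_mul, abs_of_pos (inv_pos.2 hc)]
  simp only [mul_smul] at h1
  calc _ ≤ (F.card : ℝ)⁻¹ * (2 * (η / (2 * (‖f‖ + 1))) * F.card * ‖f‖) :=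
        mul_le_mul_of_nonneg_left h1 (by positivity)
    _ = η * (‖f‖ / (‖f‖ + 1)) := by field_simp
    _ ≤ η * 1 := mul_le_mul_of_nonneg_left
        ((div_le_one (by positivity)).2 (by linarith)) hη.le
    _ = η := mul_one _

lemma integral_avg_sq_le {ν : ProbabilityMeasure X} (hν : ν ∈ MG G X) {F : Finset G} (hF : F.Nonempty)
    (p : C(X, ℝ)) (c : ℝ) :
    ∫ x, (avg F p x - c) ^ 2 ∂(ν : Measure X) ≤ ∫ x, (p x - c) ^ 2 ∂(ν : Measure X) := by
  have hc : (0 : ℝ) < F.card := by exact_mod_cast hF.card_pos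
  have h1 : ∀ x, (avg F p x - c) ^ 2 ≤ (F.card : ℝ)⁻¹ * ∑ s ∈ F, (p (s • x) - c) ^ 2 := by
    intro x
    have e : avg F p x - c = (F.card : ℝ)⁻¹ * ∑ s ∈ F, (p (s • x) - c) := by
      rw [avg_apply, Finset.sum_sub_distrib, mul_sub]
      simp [hc.ne']
    rw [e, mul_pow]
    have := sq_sum_le_card_mul_sum_sq (s := F) (f := fun s => p (s • x) - c)
    calc _ ≤ ((F.card : ℝ)⁻¹) ^ 2 * (F.card * ∑ s ∈ F, (p (s • x) - c) ^ 2) :=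
          mul_le_mul_of_nonneg_left this (by positivity)
      _ = _ := by field_simp
  refine (integral_mono (integrable_cont _ (by fun_prop)) (integrable_cont _ (by fun_prop)) h1).trans ?_
  rw [integral_const_mul, integral_finsetSum _ (fun s _ => integrable_cont _ (by fun_prop))]
  have h2 : ∀ s ∈ F, ∫ x, (p (s • x) - c) ^ 2 ∂(ν : Measure X) = ∫ x, (p x - c) ^ 2 ∂(ν : Measure X) :=
    fun s _ => mem_MG_iff.1 hν s ⟨fun x => (p x - c) ^ 2, by fun_prop⟩
  rw [Finset.sum_congr rfl h2]
  simp [hc.ne']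

theorem uniform_ergodic [Countable G] (hcpt : IsCompact (EG G X)) (f : C(X, ℝ)) {ε : ℝ} (hε : 0 < ε) :
    ∃ (K : Finset G) (δ : ℝ), 0 < δ ∧ ∀ F : Finset G, F.Nonempty → FolnerInv G K δ F →
      ∀ ν ∈ EG G X,
        ∫ x, (avg F f x - ∫ y, f y ∂(ν : Measure X)) ^ 2 ∂(ν : Measure X) ≤ ε := by
  classical
  suffices h : ∃ (K : Finset G) (δ : ℝ), 0 < δ ∧ ∀ F : Finset G, F.Nonempty → FolnerInv G K δ F →
      ∀ ν ∈ EG G X, ν ∈ EG G X →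
        ∫ x, (avg F f x - ∫ y, f y ∂(ν : Measure X)) ^ 2 ∂(ν : Measure X) ≤ ε by
    obtain ⟨K, δ, hδ, h⟩ := h
    exact ⟨K, δ, hδ, fun F hF hFF ν hν => h F hF hFF ν hν hν⟩
  refine hcpt.induction_on (p := fun s => ∃ (K : Finset G) (δ : ℝ), 0 < δ ∧ ∀ F : Finset G,
    F.Nonempty → FolnerInv G K δ F → ∀ ν ∈ s, ν ∈ EG G X →
      ∫ x, (avg F f x - ∫ y, f y ∂(ν : Measure X)) ^ 2 ∂(ν : Measure X) ≤ ε) ?_ ?_ ?_ ?_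
  · exact ⟨∅, 1, one_pos, by simp⟩
  · rintro s t hst ⟨K, δ, hδ, h⟩
    exact ⟨K, δ, hδ, fun F hF hFF ν hν => h F hF hFF ν (hst hν)⟩
  · rintro s t ⟨K, δ, hδ, h⟩ ⟨K', δ', hδ', h'⟩
    refine ⟨K ∪ K', min δ δ', lt_min hδ hδ', fun F hF hFF ν hν => ?_⟩
    rcases hν with hν | hν
    · exact h F hF (hFF.mono Finset.subset_union_left (min_le_left _ _)) ν hν
    · exact h' F hF (hFF.mono Finset.subset_union_right (min_le_right _ _)) ν hν
  · intro μ hμ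
    obtain ⟨p, hp, hpε⟩ := exists_hull_approx hμ f (show 0 < ε / 4 by positivity)
    obtain ⟨K, δ, hδ, hK⟩ := avg_hull (G := G) f hp (Real.sqrt (ε / 4)) (Real.sqrt_pos.2 (by positivity))
    have hcont : Continuous fun ν : ProbabilityMeasure X =>
        ∫ x, (p x - ∫ y, f y ∂(ν : Measure X)) ^ 2 ∂(ν : Measure X) := by
      have : ∀ ν : ProbabilityMeasure X, ∫ x, (p x - ∫ y, f y ∂(ν : Measure X)) ^ 2 ∂(ν : Measure X) =
          ∫ x, (p ^ 2) x ∂(ν : Measure X) - 2 * (∫ y, f y ∂(ν : Measure X)) * ∫ x, p x ∂(ν : Measure X)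
            + (∫ y, f y ∂(ν : Measure X)) ^ 2 := by
        intro ν
        set d := ∫ y, f y ∂(ν : Measure X)
        have : ∀ x, (p x - d) ^ 2 = ((p x) ^ 2 - 2 * d * p x) + d ^ 2 := fun x => by ring
        simp_rw [this]
        rw [integral_add (integrable_cont _ (by fun_prop)) (integrable_const _),
          integral_sub (integrable_cont _ (by fun_prop)) (integrable_cont _ (by fun_prop)),
          integral_const_mul]
        simp
      simp_rw [this]
      have h1 := continuous_integral_pm (p ^ 2)
      have h2 := continuous_integral_pm p
      have h3 := continuous_integral_pm f
      fun_prop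
    refine ⟨_, mem_nhdsWithin_of_mem_nhds ((isOpen_lt hcont continuous_const).mem_nhds hpε),
      K, δ, hδ, fun F hF hFF ν hν hνE => ?_⟩
    set d := ∫ y, f y ∂(ν : Measure X) with hd
    have hν' : ∫ x, (p x - d) ^ 2 ∂(ν : Measure X) < ε / 4 := hν
    have h1 : ∀ x, (avg F f x - d) ^ 2 ≤ 2 * (ε / 4) + 2 * (avg F p x - d) ^ 2 := by
      intro x
      have h := hK F hF hFF x
      have h' : (avg F p x - avg F f x) ^ 2 ≤ ε / 4 := by
        have := pow_le_pow_left₀ (abs_nonneg _) h 2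
        rwa [sq_abs, Real.sq_sqrt (by positivity)] at this
      nlinarith [sq_nonneg (avg F p x - avg F f x + (avg F p x - d))]
    have h2 := integral_mono (μ := (ν : Measure X)) (integrable_cont _ (by fun_prop))
      (integrable_cont _ (by fun_prop)) h1
    rw [integral_add (integrable_const _) (integrable_cont _ (by fun_prop)),
      integral_const_mul 2 (fun x => (avg F p x - d) ^ 2)] at h2
    have h3 := integral_avg_sq_le (EG_subset_MG hνE) hF p d
    simp at h2
    linarith

end AFErgodic

section AFSep

open Filter Topology

set_option linter.unusedSectionVars false

variable {G X} [Group G] [MetricSpace X] [MeasurableSpace X] [MulAction G X] [BorelSpace X]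
  [CompactSpace X] [ContinuousConstSMul G X]

/-- Two sets of ergodic measures can be approximately separated by open subsets of `X`. -/
def MSep (G : Type*) {X : Type*} [Group G] [MetricSpace X] [MeasurableSpace X] [MulAction G X]
    [BorelSpace X] (A B : Set (ProbabilityMeasure X)) : Prop :=
  ∀ ε : ℝ, 0 < ε → ∃ W₁ W₂ : Set X, IsOpen W₁ ∧ IsOpen W₂ ∧ Disjoint (closure W₁) (closure W₂) ∧
    (∀ ν ∈ A, ν ∈ EG G X → (ν : Measure X).real W₁ᶜ ≤ ε) ∧
    (∀ ν ∈ B, ν ∈ EG G X → (ν : Measure X).real W₂ᶜ ≤ ε)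

lemma MSep.symm {A B : Set (ProbabilityMeasure X)} (h : MSep G A B) : MSep G B A := by
  intro ε hε
  obtain ⟨W₁, W₂, h1, h2, h3, h4, h5⟩ := h ε hε
  exact ⟨W₂, W₁, h2, h1, h3.symm, h5, h4⟩

lemma MSep.mono {A B A' B' : Set (ProbabilityMeasure X)} (h : MSep G A B) (hA : A' ⊆ A) (hB : B' ⊆ B) :
    MSep G A' B' := by
  intro ε hε
  obtain ⟨W₁, W₂, h1, h2, h3, h4, h5⟩ := h ε hε
  exact ⟨W₁, W₂, h1, h2, h3, fun ν hν => h4 ν (hA hν), fun ν hν => h5 ν (hB hν)⟩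

lemma MSep.empty {B : Set (ProbabilityMeasure X)} : MSep G ∅ B := fun ε hε =>
  ⟨∅, univ, isOpen_empty, isOpen_univ, by simp, by simp, by simp [hε.le]⟩

lemma MSep.union {A B A' : Set (ProbabilityMeasure X)} (h : MSep G A B) (h' : MSep G A' B) :
    MSep G (A ∪ A') B := by
  intro ε hε
  obtain ⟨W₁, W₂, h1, h2, h3, h4, h5⟩ := h (ε / 2) (half_pos hε)
  obtain ⟨W₁', W₂', h1', h2', h3', h4', h5'⟩ := h' (ε / 2) (half_pos hε)
  refine ⟨W₁ ∪ W₁', W₂ ∩ W₂', h1.union h1', h2.inter h2', ?_, ?_, ?_⟩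
  · rw [closure_union, disjoint_union_left]
    have := closure_inter_subset_inter_closure W₂ W₂'
    exact ⟨h3.mono_right (this.trans inter_subset_left), h3'.mono_right (this.trans inter_subset_right)⟩
  · rintro ν (hν | hν) hE
    · have := measureReal_mono (μ := (ν : Measure X)) (compl_subset_compl.2 (subset_union_left (s := W₁) (t := W₁')))
      linarith [h4 ν hν hE]
    · have := measureReal_mono (μ := (ν : Measure X)) (compl_subset_compl.2 (subset_union_right (s := W₁) (t := W₁')))
      linarith [h4' ν hν hE]
  · intro ν hν hE
    rw [compl_inter]
    have := measureReal_union_le (μ := (ν : Measure X)) W₂ᶜ W₂'ᶜ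
    linarith [h5 ν hν hE, h5' ν hν hE]

lemma chebyshev {ν : ProbabilityMeasure X} {h : X → ℝ} (hc : Continuous h) {a d η : ℝ} (hd : 0 < d)
    (hh : ∫ x, (h x - a) ^ 2 ∂(ν : Measure X) ≤ η * d ^ 2) :
    (ν : Measure X).real {x | d ≤ |h x - a|} ≤ η := by
  have h1 := mul_meas_ge_le_integral_of_nonneg (μ := (ν : Measure X)) (f := fun x => (h x - a) ^ 2)
    (Eventually.of_forall fun x => sq_nonneg _) (integrable_cont _ (by fun_prop)) (d ^ 2)
  have h2 : {x | d ≤ |h x - a|} ⊆ {x | d ^ 2 ≤ (h x - a) ^ 2} := fun x hx => by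
    have := pow_le_pow_left₀ hd.le (show d ≤ |h x - a| from hx) 2
    rwa [sq_abs] at this
  have h3 := measureReal_mono (μ := (ν : Measure X)) h2
  have h4 : d ^ 2 * (ν : Measure X).real {x | d ^ 2 ≤ (h x - a) ^ 2} ≤ d ^ 2 * η := by linarith
  exact h3.trans (le_of_mul_le_mul_left h4 (by positivity))

lemma sep_of_lt [Countable G] (hG : AmenableGroup G) (hcpt : IsCompact (EG G X))
    {μ ν : ProbabilityMeasure X} (f : C(X, ℝ))
    (h : ∫ x, f x ∂(μ : Measure X) < ∫ x, f x ∂(ν : Measure X)) :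
    ∃ A ∈ 𝓝 μ, ∃ B ∈ 𝓝 ν, MSep G A B := by
  set a := ∫ x, f x ∂(μ : Measure X) with ha
  set b := ∫ x, f x ∂(ν : Measure X) with hb
  set d := (b - a) / 4 with hd
  have hd0 : 0 < d := by rw [hd]; linarith
  have hcf := continuous_integral_pm f
  refine ⟨{μ' | ∫ x, f x ∂(μ' : Measure X) < a + d},
    (isOpen_lt hcf continuous_const).mem_nhds (show a < a + d by linarith),
    {μ' | b - d < ∫ x, f x ∂(μ' : Measure X)},
    (isOpen_lt continuous_const hcf).mem_nhds (show b - d < b by linarith), ?_⟩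
  intro ε hε
  obtain ⟨K, δ, hδ, hK⟩ := uniform_ergodic hcpt f (show 0 < ε * (d / 2) ^ 2 by positivity)
  obtain ⟨F, hF, hFF⟩ := hG K δ hδ
  have hav : Continuous (avg F f) := (avg F f).continuous
  refine ⟨{x | avg F f x < a + d + d / 2}, {x | b - d - d / 2 < avg F f x},
    isOpen_lt hav continuous_const, isOpen_lt continuous_const hav, ?_, ?_, ?_⟩
  · have c1 : closure {x | avg F f x < a + d + d / 2} ⊆ {x | avg F f x ≤ a + d + d / 2} :=
      closure_minimal (fun x hx => by
        simp only [mem_ofPred_eq] at hx ⊢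
        exact hx.le) (isClosed_le hav continuous_const)
    have c2 : closure {x | b - d - d / 2 < avg F f x} ⊆ {x | b - d - d / 2 ≤ avg F f x} :=
      closure_minimal (fun x hx => by
        simp only [mem_ofPred_eq] at hx ⊢
        exact hx.le) (isClosed_le continuous_const hav)
    refine Disjoint.mono c1 c2 (Set.disjoint_left.2 fun x hx hx' => ?_)
    simp only [mem_ofPred_eq] at hx hx'
    linarith
  · intro ν' hν' hE
    refine (measureReal_mono ?_).trans (chebyshev hav (half_pos hd0) (hK F hF hFF ν' hE))
    intro x hx
    simp only [mem_compl_iff, mem_ofPred_eq, not_lt] at hx hν' ⊢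
    rw [le_abs]; left; linarith
  · intro ν' hν' hE
    refine (measureReal_mono ?_).trans (chebyshev hav (half_pos hd0) (hK F hF hFF ν' hE))
    intro x hx
    simp only [mem_compl_iff, mem_ofPred_eq, not_lt] at hx hν' ⊢
    rw [le_abs]; right; linarith

lemma sep_of_ne [Countable G] (hG : AmenableGroup G) (hcpt : IsCompact (EG G X))
    {μ ν : ProbabilityMeasure X} (hne : μ ≠ ν) : ∃ A ∈ 𝓝 μ, ∃ B ∈ 𝓝 ν, MSep G A B := by
  have : ∃ f : C(X, ℝ), ∫ x, f x ∂(μ : Measure X) ≠ ∫ x, f x ∂(ν : Measure X) := by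
    by_contra hcon
    push Not at hcon
    refine hne (Subtype.ext ?_)
    have : IsFiniteMeasure (μ : Measure X) := inferInstance
    have : IsFiniteMeasure (ν : Measure X) := inferInstance
    refine ext_of_forall_integral_eq_of_IsFiniteMeasure (μ := (μ : Measure X))
      (ν := (ν : Measure X)) fun f => ?_
    exact hcon f.toContinuousMap
  obtain ⟨f, hf⟩ := this
  rcases lt_or_gt_of_ne hf with h | h
  · exact sep_of_lt hG hcpt f h
  · obtain ⟨A, hA, B, hB, hAB⟩ := sep_of_lt hG hcpt f h
    exact ⟨B, hB, A, hA, hAB.symm⟩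

lemma sep_compact [Countable G] (hG : AmenableGroup G) (hcpt : IsCompact (EG G X))
    {A B : Set (ProbabilityMeasure X)} (hA : IsCompact A) (hB : IsCompact B) (hd : Disjoint A B) :
    MSep G A B := by
  have h1 : ∀ μ ∉ B, ∃ A' ∈ 𝓝 μ, MSep G A' B := by
    intro μ hμ
    refine hB.induction_on (p := fun t => ∃ A' ∈ 𝓝 μ, MSep G A' t) ?_ ?_ ?_ ?_
    · exact ⟨univ, univ_mem, MSep.empty.symm⟩
    · rintro s t hst ⟨A', hA', h⟩
      exact ⟨A', hA', h.mono subset_rfl hst⟩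
    · rintro s t ⟨A', hA', h⟩ ⟨A'', hA'', h'⟩
      exact ⟨A' ∩ A'', inter_mem hA' hA'', ((h.mono inter_subset_left subset_rfl).symm.union
        (h'.mono inter_subset_right subset_rfl).symm).symm⟩
    · intro ν hν
      obtain ⟨A', hA', B', hB', h⟩ := sep_of_ne (G := G) hG hcpt (μ := μ) (ν := ν)
        (fun h => hμ (h ▸ hν))
      exact ⟨B', mem_nhdsWithin_of_mem_nhds hB', A', hA', h⟩
  refine hA.induction_on (p := fun s => MSep G s B) MSep.empty (fun s t hst h => h.mono hst subset_rfl)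
    (fun s t h h' => h.union h') fun μ hμ => ?_
  obtain ⟨A', hA', h⟩ := h1 μ (Set.disjoint_left.1 hd hμ)
  exact ⟨A', mem_nhdsWithin_of_mem_nhds hA', h⟩

def resV (S : Finset G) (V W : Set X) : Set X := V ∩ ⋂ s ∈ S, (fun x => s • x) ⁻¹' W

lemma resV_isOpen {S : Finset G} {V W : Set X} (hV : IsOpen V) (hW : IsOpen W) :
    IsOpen (resV S V W) :=
  hV.inter (isOpen_biInter_finset fun s _ => hW.preimage (by fun_prop))

lemma closure_resV {S : Finset G} {V W : Set X} :
    closure (resV S V W) ⊆ closure V := closure_mono inter_subset_left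

lemma smul_closure_resV {S : Finset G} {V W : Set X} :
    (S : Set G) • closure (resV S V W) ⊆ closure W := by
  rintro _ ⟨s, hs, x, hx, rfl⟩
  have h1 : resV S V W ⊆ (fun x => s • x) ⁻¹' closure W := fun y hy => by
    have := hy.2
    simp only [mem_iInter] at this
    exact subset_closure (this s hs)
  exact closure_minimal h1 (isClosed_closure.preimage (by fun_prop)) hx

lemma OCas.res {K : Finset G} {δ : ℝ} {ι : Type} {S : ι → Finset G} {V : ι → Set X}
    (h : OCas K δ S V) {W : Set X} (hW : IsOpen W) : OCas K δ S fun i => resV (S i) (V i) W where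
  isOpen i := resV_isOpen (h.isOpen i) hW
  folner := h.folner
  tower i := (h.tower i).mono subset_rfl closure_resV
  diam i s hs := (diam_smul_mono s closure_resV).trans_lt (h.diam i s hs)
  disj i j hij := (h.disj i j hij).mono (Set.smul_subset_smul_left closure_resV)
    (Set.smul_subset_smul_left closure_resV)

lemma OCas.sum {K : Finset G} {δ : ℝ} {ι ι' : Type} {S : ι → Finset G} {V : ι → Set X}
    {S' : ι' → Finset G} {V' : ι' → Set X}
    (h : OCas K δ S V) (h' : OCas K δ S' V') {W W' : Set X} (hW : Disjoint W W')
    (hS : ∀ i, (S i : Set G) • closure (V i) ⊆ W) (hS' : ∀ i, (S' i : Set G) • closure (V' i) ⊆ W') :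
    OCas K δ (Sum.elim S S') (Sum.elim V V') where
  isOpen := by rintro (i | i); exacts [h.isOpen i, h'.isOpen i]
  folner := by rintro (i | i); exacts [h.folner i, h'.folner i]
  tower := by rintro (i | i); exacts [h.tower i, h'.tower i]
  diam := by rintro (i | i); exacts [h.diam i, h'.diam i]
  disj := by
    rintro (i | i) (j | j) hij
    · exact h.disj i j fun e => hij (by rw [e])
    · exact hW.mono (hS i) (hS' j)
    · exact hW.symm.mono (hS' i) (hS j)
    · exact h'.disj i j fun e => hij (by rw [e])

lemma real_res {ν : Measure X} [IsProbabilityMeasure ν] [SMulInvariantMeasure G X ν] {ι : Type}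
    [Fintype ι] (S : ι → Finset G) (V : ι → Set X) (W : Set X) {η : ℝ} (hW : ν.real Wᶜ ≤ η) :
    ν.real (⋃ i, (S i : Set G) • V i) ≤ ν.real (⋃ i, (S i : Set G) • resV (S i) (V i) W) +
      (∑ i, ((S i).card : ℝ) * (S i).card) * η := by
  have hsub : (⋃ i, (S i : Set G) • V i) ⊆ (⋃ i, (S i : Set G) • resV (S i) (V i) W) ∪
      ⋃ i ∈ (Finset.univ : Finset ι), ⋃ p ∈ S i ×ˢ S i, (p.1 * p.2⁻¹) • Wᶜ := by
    intro x hx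
    obtain ⟨i, s, hs, v, hv, rfl⟩ := mem_iUnion.1 hx
    by_cases hvW : v ∈ resV (S i) (V i) W
    · exact Or.inl (mem_iUnion.2 ⟨i, smul_mem_smul hs hvW⟩)
    · right
      have : ∃ t ∈ S i, t • v ∉ W := by
        by_contra hcon
        push Not at hcon
        exact hvW ⟨hv, by simpa using hcon⟩
      obtain ⟨t, ht, htW⟩ := this
      refine mem_iUnion₂.2 ⟨i, Finset.mem_univ _, mem_iUnion₂.2 ⟨(s, t),
        Finset.mem_product.2 ⟨hs, ht⟩, t • v, htW, ?_⟩⟩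
      simp [mul_smul]
  have h1 := (measureReal_mono (μ := ν) hsub).trans (measureReal_union_le _ _)
  have h2 : ν.real (⋃ i ∈ (Finset.univ : Finset ι), ⋃ p ∈ S i ×ˢ S i, (p.1 * p.2⁻¹) • Wᶜ) ≤
      ∑ i, ((S i).card : ℝ) * (S i).card * η := by
    refine (measureReal_biUnion_finset_le _ _).trans (Finset.sum_le_sum fun i _ => ?_)
    refine (measureReal_biUnion_finset_le _ _).trans ?_
    calc _ ≤ ∑ p ∈ S i ×ˢ S i, η := Finset.sum_le_sum fun p _ => by rw [real_smul]; exact hW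
      _ = _ := by simp
  rw [← Finset.sum_mul] at h2
  linarith

lemma castle_union [Countable G] (hG : AmenableGroup G) (hcpt : IsCompact (EG G X))
    {K : Finset G} {δ : ℝ} {A B : Set (ProbabilityMeasure X)} (hA : IsCompact A) (hB : IsCompact B)
    (hAE : A ⊆ EG G X) (hBE : B ⊆ EG G X)
    (hd : Disjoint A B) {ι ι' : Type} [Finite ι] [Finite ι'] {S : ι → Finset G} {V : ι → Set X}
    {S' : ι' → Finset G} {V' : ι' → Set X} (h : OCas K δ S V) (h' : OCas K δ S' V') {c γ : ℝ}
    (hγ : 0 < γ) (hc : ∀ ν ∈ A, c ≤ (ν : Measure X).real (⋃ i, (S i : Set G) • V i))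
    (hc' : ∀ ν ∈ B, c ≤ (ν : Measure X).real (⋃ i, (S' i : Set G) • V' i)) :
    ∃ (κ : Type) (_ : Finite κ) (T : κ → Finset G) (U : κ → Set X), OCas K δ T U ∧
      ∀ ν ∈ A ∪ B, c - γ ≤ (ν : Measure X).real (⋃ i, (T i : Set G) • U i) := by
  have := Fintype.ofFinite ι
  have := Fintype.ofFinite ι'
  obtain ⟨N, hN⟩ : ∃ N : ℝ, N = ∑ i, ((S i).card : ℝ) * (S i).card := ⟨_, rfl⟩
  obtain ⟨N', hN'⟩ : ∃ N' : ℝ, N' = ∑ i, ((S' i).card : ℝ) * (S' i).card := ⟨_, rfl⟩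
  have hN0 : 0 ≤ N := hN ▸ Finset.sum_nonneg fun i _ => by positivity
  have hN0' : 0 ≤ N' := hN' ▸ Finset.sum_nonneg fun i _ => by positivity
  have hpos : 0 < γ / (N + N' + 1) := by positivity
  have hle : (N + N' + 1) * (γ / (N + N' + 1)) = γ := by field_simp
  generalize γ / (N + N' + 1) = η at hpos hle
  obtain ⟨W, W', hW, hW', hWW, hWA, hWB⟩ := sep_compact hG hcpt hA hB hd η hpos
  refine ⟨ι ⊕ ι', inferInstance, _, _, (h.res hW).sum (h'.res hW') hWW
    (fun i => smul_closure_resV) (fun i => smul_closure_resV), ?_⟩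
  rw [iUnion_sum]
  simp only [Sum.elim_inl, Sum.elim_inr]
  rintro ν (hν | hν)
  · have := smulInvariant_of_mem (EG_subset_MG (hAE hν))
    have h1 := real_res S V W (hWA ν hν (hAE hν))
    rw [← hN] at h1
    have h2 := hc ν hν
    refine le_trans ?_ (measureReal_mono subset_union_left)
    nlinarith [mul_nonneg hN0 hpos.le, mul_nonneg hN0' hpos.le]
  · have := smulInvariant_of_mem (EG_subset_MG (hBE hν))
    have h1 := real_res S' V' W' (hWB ν hν (hBE hν))
    rw [← hN'] at h1
    have h2 := hc' ν hν
    refine le_trans ?_ (measureReal_mono subset_union_right)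
    nlinarith [mul_nonneg hN0 hpos.le, mul_nonneg hN0' hpos.le]

theorem castle_EG [Countable G] (hG : AmenableGroup G) (hfree : FreeAction G X)
    (hcpt : IsCompact (EG G X)) (hzd : IsTotallyDisconnected (EG G X))
    (K : Finset G) {δ ε : ℝ} (hδ : 0 < δ) (hε : 0 < ε) :
    ∃ (κ : Type) (_ : Finite κ) (T : κ → Finset G) (U : κ → Set X), OCas K δ T U ∧
      ∀ ν ∈ EG G X, 1 - ε < (ν : Measure X).real (⋃ i, (T i : Set G) • U i) := by
  have hcs : CompactSpace (EG G X) := isCompact_iff_compactSpace.1 hcpt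
  have htd : TotallyDisconnectedSpace (EG G X) := totallyDisconnectedSpace_subtype_iff.2 hzd
  have key : ∃ N : Set (EG G X), IsClopen N ∧ univ ⊆ N ∧ ∃ c, 1 - ε < c ∧
      ∃ (κ : Type) (_ : Finite κ) (T : κ → Finset G) (U : κ → Set X), OCas K δ T U ∧
      ∀ ν ∈ N, c ≤ ((ν : ProbabilityMeasure X) : Measure X).real (⋃ i, (T i : Set G) • U i) := by
    refine isCompact_univ.induction_on (p := fun s => ∃ N : Set (EG G X), IsClopen N ∧ s ⊆ N ∧
      ∃ c, 1 - ε < c ∧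
      ∃ (κ : Type) (_ : Finite κ) (T : κ → Finset G) (U : κ → Set X), OCas K δ T U ∧
      ∀ ν ∈ N, c ≤ ((ν : ProbabilityMeasure X) : Measure X).real (⋃ i, (T i : Set G) • U i)) ?_ ?_ ?_ ?_
    · refine ⟨∅, isClopen_empty, subset_rfl, 1, by linarith, Empty, inferInstance, Empty.elim,
        Empty.elim, ⟨by simp, by simp, by simp, by simp, by simp⟩, by simp⟩
    · rintro s t hst ⟨N, hN, hs, h⟩
      exact ⟨N, hN, hst.trans hs, h⟩
    · rintro s t ⟨N, hN, hs, c, hc, κ, hκ, T, U, hTU, hν⟩ ⟨N', hN', hs', c', hc', κ', hκ', T', U', hTU', hν'⟩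
      have hi : ∀ {M : Set (EG G X)}, IsClopen M → IsCompact (Subtype.val '' M) := fun hM =>
        hM.isClosed.isCompact.image continuous_subtype_val
      set c₀ := min c c' with hc₀
      have hc₀' : 1 - ε < c₀ := lt_min hc hc'
      obtain ⟨κ₂, hκ₂, T₂, U₂, h₂, hν₂⟩ := castle_union hG hcpt (hi hN) (hi (hN'.diff hN))
        (by rintro _ ⟨ν, _, rfl⟩; exact ν.2) (by rintro _ ⟨ν, _, rfl⟩; exact ν.2)
        ((disjoint_image_iff Subtype.val_injective).2 disjoint_sdiff_right) hTU hTU'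
        (c := c₀) (γ := (c₀ - (1 - ε)) / 2) (by linarith)
        (by rintro _ ⟨ν, h, rfl⟩; exact (min_le_left _ _).trans (hν ν h))
        (by rintro _ ⟨ν, h, rfl⟩; exact (min_le_right _ _).trans (hν' ν h.1))
      refine ⟨N ∪ N', hN.union hN', union_subset_union hs hs', c₀ - (c₀ - (1 - ε)) / 2, by linarith,
        κ₂, hκ₂, T₂, U₂, h₂, fun ν h => hν₂ ν ?_⟩
      rw [← image_union, union_sdiff_self]
      exact mem_image_of_mem _ h
    · intro μ _
      have := smulInvariant_of_mem (EG_subset_MG μ.2)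
      obtain ⟨ι, hι, S, V, hSV, hμ⟩ := exists_ocas hG hfree K hδ (half_pos hε)
        ((μ : ProbabilityMeasure X) : Measure X)
      have hO : IsOpen (⋃ i, (S i : Set G) • V i) := isOpen_iUnion fun i => (hSV.isOpen i).smul_left
      have hev := eventually_lt_real hO hμ
      have hev' := (continuous_subtype_val (p := fun ν => ν ∈ EG G X)).continuousAt.eventually hev
      obtain ⟨N, ⟨hμN, hN⟩, hsub⟩ := (nhds_basis_clopen μ).mem_iff.1 hev'
      refine ⟨N, mem_nhdsWithin_of_mem_nhds (hN.isOpen.mem_nhds hμN), N, hN, subset_rfl, 1 - ε / 2,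
        by linarith, ι, hι, S, V, hSV, fun ν hν => le_of_lt (hsub hν)⟩
  obtain ⟨N, -, hN, c, hc, κ, hκ, T, U, hTU, hν⟩ := key
  exact ⟨κ, hκ, T, U, hTU, fun ν h => hc.trans_le (hν ⟨ν, h⟩ (hN (mem_univ _)))⟩

end AFSep

section AFKM

open Filter Topology

set_option linter.unusedSectionVars false

variable {G X} [Group G] [MetricSpace X] [MeasurableSpace X] [MulAction G X] [BorelSpace X]
  [CompactSpace X] [ContinuousConstSMul G X]

lemma pm_ext {μ ν : ProbabilityMeasure X}
    (h : ∀ f : C(X, ℝ), ∫ x, f x ∂(μ : Measure X) = ∫ x, f x ∂(ν : Measure X)) : μ = ν := by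
  refine Subtype.ext ?_
  have : IsFiniteMeasure (μ : Measure X) := inferInstance
  have : IsFiniteMeasure (ν : Measure X) := inferInstance
  refine ext_of_forall_integral_eq_of_IsFiniteMeasure (μ := (μ : Measure X))
    (ν := (ν : Measure X)) fun f => ?_
  exact h f.toContinuousMap

lemma conv_max {p q x y z M : ℝ} (hp : 0 < p) (hq : 0 < q) (hpq : p + q = 1)
    (h : p * x + q * y = z) (hM : M ≤ z) (hy : y ≤ M) : M ≤ x := by
  by_contra hcon
  push Not at hcon
  have h1 := mul_lt_mul_of_pos_left hcon hp
  have h2 := mul_le_mul_of_nonneg_left hy hq.le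
  have h3 : p * M + q * M = M := by rw [← add_mul, hpq, one_mul]
  linarith

lemma exists_cond {μ : ProbabilityMeasure X} (hμ : μ ∈ MG G X) {A : Set X} (hA : MeasurableSet A)
    (hinv : ∀ g : G, g • A = A) (h0 : (μ : Measure X).real A ≠ 0) :
    ∃ ν ∈ MG G X, (∀ s, MeasurableSet s → (μ : Measure X).real A * (ν : Measure X).real s =
      (μ : Measure X).real (A ∩ s)) ∧
      ∀ f : C(X, ℝ), (μ : Measure X).real A * ∫ x, f x ∂(ν : Measure X) =
        ∫ x in A, f x ∂(μ : Measure X) := by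
  have h0' : (μ : Measure X) A ≠ 0 := fun h => h0 (by simp [Measure.real, h])
  have hp : IsProbabilityMeasure (ProbabilityTheory.cond (μ : Measure X) A) :=
    ProbabilityTheory.cond_isProbabilityMeasure h0'
  have hsi := smulInvariant_of_mem hμ
  have hpre : ∀ g : G, (fun x => g • x) ⁻¹' A = A := fun g => by
    conv_lhs => rw [← hinv g]
    ext x
    simp
  have hsm : SMulInvariantMeasure G X (ProbabilityTheory.cond (μ : Measure X) A) := by
    refine ⟨fun g s hs => ?_⟩
    rw [ProbabilityTheory.cond_apply hA, ProbabilityTheory.cond_apply hA]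
    congr 1
    conv_lhs => rw [← hpre g]
    rw [← preimage_inter]
    exact hsi.measure_preimage_smul g (hA.inter hs)
  obtain ⟨ν, hν⟩ : ∃ ν : ProbabilityMeasure X,
      (ν : Measure X) = ProbabilityTheory.cond (μ : Measure X) A := ⟨⟨_, hp⟩, rfl⟩
  rw [← hν] at hsm
  refine ⟨ν, mem_MG_of_smulInvariant, ?_, ?_⟩
  · intro s hs
    rw [hν]
    simp only [Measure.real] at h0 ⊢
    rw [ProbabilityTheory.cond_apply hA,
      ENNReal.toReal_mul, ← mul_assoc, ENNReal.toReal_inv, mul_inv_cancel₀ h0, one_mul]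
  · intro f
    rw [hν, ProbabilityTheory.cond, integral_smul_measure, smul_eq_mul, ← mul_assoc,
      ENNReal.toReal_inv]
    rw [show (μ : Measure X).real A = ((μ : Measure X) A).toReal from rfl] at h0 ⊢
    rw [mul_inv_cancel₀ h0, one_mul]

theorem km_closed {C : Set X} (hC : IsClosed C) {a : ℝ}
    (h : ∀ ν ∈ EG G X, (ν : Measure X).real C < a) : ∀ ν ∈ MG G X, (ν : Measure X).real C < a := by
  intro μ₀ hμ₀
  by_contra hcon
  push Not at hcon
  have husc : UpperSemicontinuousOn (fun ν : ProbabilityMeasure X => (ν : Measure X).real C) (MG G X) :=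
    fun ν _ b hb => mem_nhdsWithin_of_mem_nhds (eventually_real_lt hC hb)
  obtain ⟨μ₁, hμ₁, hmax⟩ := husc.exists_isMaxOn ⟨μ₀, hμ₀⟩ isClosed_MG.isCompact
  have hmax' : ∀ ν ∈ MG G X, (ν : Measure X).real C ≤ (μ₁ : Measure X).real C := fun ν hν => hmax hν
  set M := (μ₁ : Measure X).real C with hM
  have haM : a ≤ M := hcon.trans (hmax' _ hμ₀)
  set Z : Set (ProbabilityMeasure X) := MG G X ∩ {ν | M ≤ (ν : Measure X).real C} with hZ
  have hZc : IsCompact Z := by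
    refine (isClosed_MG.inter ?_).isCompact
    rw [← isOpen_compl_iff, isOpen_iff_mem_nhds]
    intro ν hν
    simp only [mem_compl_iff, mem_ofPred_eq, not_le] at hν
    filter_upwards [eventually_real_lt hC hν] with ν' h'
    simpa using h'
  let Φ : ProbabilityMeasure X → (C(X, ℝ) → ℝ) := fun μ f => ∫ x, f x ∂(μ : Measure X)
  have hΦ : Continuous Φ := continuous_pi fun f => continuous_integral_pm f
  obtain ⟨y, hy⟩ := (hZc.image hΦ).extremePoints_nonempty ⟨Φ μ₁, μ₁, ⟨hμ₁, le_refl M⟩, rfl⟩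
  obtain ⟨μ, hμZ, rfl⟩ := hy.1
  have hE : μ ∈ EG G X := by
    refine ⟨hμZ.1, fun A hA hinv => ?_⟩
    by_contra hne
    push Not at hne
    have hr0 : (μ : Measure X).real A ≠ 0 := by
      rw [← pm_real]; exact_mod_cast hne.1
    have hr1 : (μ : Measure X).real A ≠ 1 := by
      rw [← pm_real]; exact_mod_cast hne.2
    have hcs : (μ : Measure X).real Aᶜ = 1 - (μ : Measure X).real A := probReal_compl_eq_one_sub hA
    have hc0 : (μ : Measure X).real Aᶜ ≠ 0 := by
      rw [hcs]; exact sub_ne_zero.2 hr1.symm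
    obtain ⟨ν, hν, hν1, hν2⟩ := exists_cond hμZ.1 hA hinv hr0
    obtain ⟨ν', hν', hν1', hν2'⟩ := exists_cond hμZ.1 hA.compl
      (fun g => by rw [Set.smul_set_compl, hinv]) hc0
    have hp0 : 0 < (μ : Measure X).real A := lt_of_le_of_ne measureReal_nonneg hr0.symm
    have hq0 : 0 < (μ : Measure X).real Aᶜ := lt_of_le_of_ne measureReal_nonneg hc0.symm
    have hsumC : (μ : Measure X).real A * (ν : Measure X).real C +
        (μ : Measure X).real Aᶜ * (ν' : Measure X).real C = (μ : Measure X).real C := by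
      rw [hν1 C hC.measurableSet, hν1' C hC.measurableSet, inter_comm, inter_comm Aᶜ, ← sdiff_eq]
      exact measureReal_inter_add_sdiff hA
    have hMC : M ≤ (μ : Measure X).real C := hμZ.2
    have hνM := hmax' ν hν
    have hν'M := hmax' ν' hν'
    have hZν : ν ∈ Z := ⟨hν, show M ≤ (ν : Measure X).real C from conv_max (p := (μ : Measure X).real A) (q := (μ : Measure X).real Aᶜ)
      hp0 hq0 (by linarith) hsumC hMC hν'M⟩
    have hZν' : ν' ∈ Z := ⟨hν', show M ≤ (ν' : Measure X).real C from conv_max (p := (μ : Measure X).real Aᶜ) (q := (μ : Measure X).real A)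
      hq0 hp0 (by linarith) (by linarith) hMC hνM⟩
    have hseg : Φ μ ∈ openSegment ℝ (Φ ν) (Φ ν') := by
      refine ⟨_, _, hp0, hq0, by rw [hcs]; ring, ?_⟩
      funext f
      change _ * ∫ x, f x ∂(ν : Measure X) + _ * ∫ x, f x ∂(ν' : Measure X) = ∫ x, f x ∂(μ : Measure X)
      rw [hν2, hν2']
      exact integral_add_compl hA (integrable_cont _ f.continuous)
    have heq : Φ ν = Φ μ := hy.2 ⟨ν, hZν, rfl⟩ ⟨ν', hZν', rfl⟩ hseg
    have hνμ : ν = μ := pm_ext fun f => congrFun heq f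
    have := hν1 A hA
    rw [hνμ, inter_self] at this
    exact hr1 (mul_left_cancel₀ hr0 (by linarith))
  have h1 := h μ hE
  have h2 : M ≤ (μ : Measure X).real C := hμZ.2
  linarith

theorem castle_MG [Countable G] (hG : AmenableGroup G) (hfree : FreeAction G X)
    (hcpt : IsCompact (EG G X)) (hzd : IsTotallyDisconnected (EG G X))
    (K : Finset G) {δ ε : ℝ} (hδ : 0 < δ) (hε : 0 < ε) :
    ∃ (I : ℕ) (T : Fin I → Finset G) (U : Fin I → Set X), OCas K δ T U ∧
      ∀ ν ∈ MG G X, (ν : Measure X).real (⋃ i, (T i : Set G) • U i)ᶜ < ε := by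
  obtain ⟨κ, hκ, T, U, h, hν⟩ := castle_EG hG hfree hcpt hzd K hδ hε
  obtain ⟨I, ⟨e⟩⟩ := Finite.exists_equiv_fin κ
  refine ⟨I, T ∘ e.symm, U ∘ e.symm, ⟨fun i => h.isOpen _, fun i => h.folner _, fun i => h.tower _,
    fun i => h.diam _, fun i j hij => h.disj _ _ fun he => hij (e.symm.injective he)⟩, ?_⟩
  have hU : (⋃ i, ((T ∘ e.symm) i : Set G) • (U ∘ e.symm) i) = ⋃ i, (T i : Set G) • U i :=
    e.symm.surjective.iUnion_comp (fun i => (T i : Set G) • U i)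
  rw [hU]
  have hO : IsOpen (⋃ i, (T i : Set G) • U i) := isOpen_iUnion fun i => (h.isOpen i).smul_left
  refine km_closed hO.isClosed_compl fun ν h => ?_
  rw [probReal_compl_eq_one_sub hO.measurableSet]
  linarith [hν ν h]

end AFKM

section AFFinal

open Filter Topology

set_option linter.unusedSectionVars false

variable {G X} [Group G] [MetricSpace X] [MeasurableSpace X] [MulAction G X] [BorelSpace X]
  [CompactSpace X] [ContinuousConstSMul G X]

lemma FolnerInv.card_le {K S : Finset G} {δ : ℝ} (h : FolnerInv G K δ S) (hδ : δ ≤ 1 / 2)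
    (hS : S.Nonempty) : K.card ≤ S.card := by
  have hc : (0 : ℝ) < S.card := by exact_mod_cast hS.card_pos
  have h1 : (0 : ℝ) < ({s | s ∈ S ∧ ∀ k ∈ K, k * s ∈ S} : Set G).ncard := by
    unfold FolnerInv at h
    nlinarith
  have h2 : ({s | s ∈ S ∧ ∀ k ∈ K, k * s ∈ S} : Set G).ncard ≠ 0 := by
    intro h0; rw [h0] at h1; simp at h1
  obtain ⟨s, -, hs⟩ := Set.nonempty_of_ncard_ne_zero h2
  exact Finset.card_le_card_of_injOn (fun k => k * s) hs fun a _ b _ hab => mul_right_cancel hab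

lemma exists_levels (S : Finset G) {a k : ℕ} (h : a * k ≤ S.card) :
    ∃ e : Fin a × Fin k → G, Function.Injective e ∧ ∀ p, e p ∈ S := by
  obtain ⟨f, hf, hf'⟩ := exists_injOn_finset (Finset.univ : Finset (Fin a × Fin k)) S (by simpa using h)
  exact ⟨f, fun x y hxy => hf (by simp) (by simp) hxy, fun p => hf' p (by simp)⟩

theorem almostFinite_of_comparison [Countable G] [Infinite G] (hG : AmenableGroup G)
    (hfree : FreeAction G X) (hcpt : IsCompact (EG G X)) (hzd : IsTotallyDisconnected (EG G X))
    {m : ℕ} (hcomp : HasMComparison G X m) : MAlmostFinite G X 0 := by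
  classical
  intro n hn K δ hδ
  obtain ⟨q, hq⟩ : ∃ q : ℕ, q = n * (m + 1) := ⟨_, rfl⟩
  have hq0 : 0 < q := by rw [hq]; positivity
  have hqr : (0 : ℝ) < q := by exact_mod_cast hq0
  obtain ⟨K', hKK', hK'⟩ := Infinite.exists_superset_card_eq K (max K.card q) (le_max_left _ _)
  obtain ⟨I, S, V, hSV, hμ⟩ := castle_MG hG hfree hcpt hzd K' (δ := min δ (1 / 2)) (ε := 1 / (4 * q))
    (lt_min hδ (by norm_num)) (by positivity)
  have hcard : ∀ i, (S i).Nonempty → q ≤ (S i).card := fun i hi =>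
    (le_max_right _ _).trans (hK' ▸ (hSV.folner i).card_le (min_le_right _ _) hi)
  obtain ⟨k, hk⟩ : ∃ k : Fin I → ℕ, ∀ i, k i = (S i).card / q := ⟨_, fun i => rfl⟩
  have hkq : ∀ i, k i * q ≤ (S i).card := fun i => by rw [hk]; exact Nat.div_mul_le_self _ _
  have hk1 : ∀ i, n * ((m + 1) * k i) ≤ (S i).card := fun i => by
    have := hkq i
    rw [hq] at this
    calc _ = k i * (n * (m + 1)) := by ring
      _ ≤ _ := this
  have hk2 : ∀ i, (S i).card ≤ 2 * q * k i := fun i => by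
    rcases (S i).eq_empty_or_nonempty with h | h
    · simp [h]
    · have h1 : 1 ≤ k i := by rw [hk]; exact (Nat.one_le_div_iff hq0).2 (hcard i h)
      have h2 := Nat.div_add_mod (S i).card q
      have h3 := Nat.mod_lt (S i).card hq0
      rw [← hk] at h2
      nlinarith
  have hlev : ∀ i, ∃ e : Fin (m + 1) × Fin (k i) → G, Function.Injective e ∧ ∀ p, e p ∈ S i :=
    fun i => exists_levels (S i) ((Nat.le_mul_of_pos_left _ hn).trans (hk1 i))
  choose e hinj heS using hlev
  have hlevdisj : ∀ i p j p', (⟨i, p⟩ : Σ i, Fin (m + 1) × Fin (k i)) ≠ ⟨j, p'⟩ →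
      Disjoint (e i p • V i) (e j p' • V j) := by
    intro i p j p' hne
    by_cases hij : i = j
    · subst hij
      have : e i p ≠ e i p' := fun h => hne (by rw [hinj i h])
      exact (hSV.tower i (heS i p) (heS i p') this).mono (smul_set_mono subset_closure)
        (smul_set_mono subset_closure)
    · refine (hSV.disj i j hij).mono ?_ ?_
      · exact (smul_set_mono subset_closure).trans (smul_set_subset_smul (heS i p))
      · exact (smul_set_mono subset_closure).trans (smul_set_subset_smul (heS j p'))
  let T : Fin I → Finset G := fun i => Finset.univ.image fun r : Fin (k i) => e i (0, r)
  have hTS : ∀ i, T i ⊆ S i := fun i t ht => by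
    obtain ⟨r, -, rfl⟩ := Finset.mem_image.1 ht
    exact heS _ _
  have hTc : ∀ i, (T i).card = k i := fun i => by
    rw [Finset.card_image_of_injective _ fun r r' h => (Prod.ext_iff.1 (hinj i h)).2]
    simp
  have hO : IsOpen (⋃ i, (S i : Set G) • V i) := isOpen_iUnion fun i => (hSV.isOpen i).smul_left
  have hOT : IsOpen (⋃ i, (T i : Set G) • V i) := isOpen_iUnion fun i => (hSV.isOpen i).smul_left
  have hmain : SubordinateM G X m (⋃ i, (S i : Set G) • V i)ᶜ (⋃ i, (T i : Set G) • V i) := by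
    refine hcomp _ _ hO.isClosed_compl hOT fun μ hμM => ?_
    rw [← NNReal.coe_lt_coe, pm_real, pm_real]
    have hinv := smulInvariant_of_mem hμM
    have h1 := hμ μ hμM
    refine h1.trans ?_
    rw [probReal_compl_eq_one_sub hO.measurableSet] at h1
    have h2 : (μ : Measure X).real (⋃ i, (S i : Set G) • V i) ≤
        ∑ i, ((S i).card : ℝ) * (μ : Measure X).real (V i) := by
      refine (measureReal_iUnion_fintype_le _).trans (Finset.sum_le_sum fun i _ => ?_)
      rw [real_tower (hSV.isOpen i).measurableSet ((hSV.tower i).mono subset_rfl subset_closure)]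
    have h3 : (μ : Measure X).real (⋃ i, (T i : Set G) • V i) =
        ∑ i, (k i : ℝ) * (μ : Measure X).real (V i) := by
      rw [measureReal_iUnion_fintype]
      · refine Finset.sum_congr rfl fun i _ => ?_
        rw [real_tower (hSV.isOpen i).measurableSet ((hSV.tower i).mono (hTS i) subset_closure), hTc]
      · intro i j hij
        exact (hSV.disj i j hij).mono (Set.smul_subset_smul (hTS i) subset_closure)
          (Set.smul_subset_smul (hTS j) subset_closure)
      · exact fun i => measurableSet_smul_finset _ (hSV.isOpen i).measurableSet
    have h4 : ∑ i, ((S i).card : ℝ) * (μ : Measure X).real (V i) ≤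
        (2 * q) * ∑ i, (k i : ℝ) * (μ : Measure X).real (V i) := by
      rw [Finset.mul_sum]
      refine Finset.sum_le_sum fun i _ => ?_
      rw [← mul_assoc]
      exact mul_le_mul_of_nonneg_right (by exact_mod_cast hk2 i) measureReal_nonneg
    rw [← h3] at h4
    have h5 : (1 : ℝ) / (4 * q) ≤ 1 / 4 := by
      have : (1 : ℝ) ≤ q := by exact_mod_cast hq0
      gcongr
      linarith
    have h6 : (1 : ℝ) / 2 < (2 * q) * (μ : Measure X).real (⋃ i, (T i : Set G) • V i) := by linarith
    rw [div_lt_iff₀ (by positivity)]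
    linarith
  obtain ⟨N, U, s, c, hU, hcov, hsub, hdis⟩ := hmain
  refine ⟨I, S, V, fun _ => 0, fun i => Finset.univ.image (e i), hSV.isOpen, hSV.tower,
    fun i => (hSV.folner i).mono hKK' (min_le_left _ _),
    fun i s hs => (hSV.diam i s hs).trans_le (min_le_left _ _), fun i j hij _ => hSV.disj i j hij,
    ?_, ?_, ?_⟩
  · intro i t ht
    obtain ⟨p, -, rfl⟩ := Finset.mem_image.1 ht
    exact heS _ _
  · intro i
    rw [Finset.card_image_of_injective _ (hinj i), le_div_iff₀ (by exact_mod_cast hn)]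
    simp only [Finset.card_univ, Fintype.card_prod, Fintype.card_fin]
    rw [mul_comm]
    exact_mod_cast hk1 i
  · rw [← compl_eq_univ_sdiff]
    have hlsub : ∀ (l : Fin N) (i : Fin I) (r : Fin (k i)),
        (e i (c l, r) * (e i (0, r))⁻¹ * s l) • (U l ∩ (s l)⁻¹ • e i (0, r) • V i) ⊆
          e i (c l, r) • V i := by
      intro l i r
      rintro _ ⟨x, ⟨-, hx⟩, rfl⟩
      rw [mem_smul_set_iff_inv_smul_mem, inv_inv, mem_smul_set_iff_inv_smul_mem] at hx
      refine ⟨_, hx, ?_⟩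
      simp [mul_smul]
    refine subordinateM_of_finite (ι := Fin N × Σ i, Fin (k i))
      (fun a => U a.1 ∩ (s a.1)⁻¹ • e a.2.1 (0, a.2.2) • V a.2.1)
      (fun a => e a.2.1 (c a.1, a.2.2) * (e a.2.1 (0, a.2.2))⁻¹ * s a.1) (fun _ => 0) ?_ ?_ ?_ ?_
    · exact fun a => (hU _).inter (((hSV.isOpen _).smul _).smul _)
    · intro x hx
      obtain ⟨l, hl⟩ := mem_iUnion.1 (hcov hx)
      obtain ⟨i, t, ht, y, hy, hty⟩ := mem_iUnion.1 (hsub l (smul_mem_smul_set hl))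
      obtain ⟨r, -, rfl⟩ := Finset.mem_image.1 ht
      refine mem_iUnion.2 ⟨(l, ⟨i, r⟩), hl, ?_⟩
      rw [mem_smul_set_iff_inv_smul_mem, inv_inv]
      exact ⟨y, hy, hty⟩
    · rintro ⟨l, i, r⟩
      refine (hlsub l i r).trans (Subset.trans ?_ (subset_iUnion _ i))
      exact smul_set_subset_smul (by simp)
    · rintro ⟨l, i, r⟩ ⟨l', i', r'⟩ hne -
      by_cases heq : (⟨i, (c l, r)⟩ : Σ i, Fin (m + 1) × Fin (k i)) = ⟨i', (c l', r')⟩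
      · obtain ⟨rfl, h2⟩ := Sigma.mk.inj_iff.1 heq
        obtain ⟨hcl, hrr⟩ := Prod.ext_iff.1 (eq_of_heq h2)
        simp only at hcl hrr
        subst hrr
        have hll : l ≠ l' := fun h => hne (by rw [h])
        have hd := hdis l l' hll hcl
        simp only [← hcl]
        rw [mul_smul, mul_smul (_ * _) (s l')]
        refine ((Set.disjoint_smul_set).2 (hd.mono ?_ ?_)) <;>
        exact smul_set_mono inter_subset_left
      · exact (hlevdisj _ _ _ _ heq).mono (hlsub l i r) (hlsub l' i' r')

end AFFinal

/-- For a minimal free action with `E_G(X)` compact and zero-dimensional, the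
following are equivalent: almost finiteness, `m`-almost finiteness for some `m`, dynamical
comparison, and dynamical `m`-comparison for some `m`. -/
theorem tfae_almostFinite_comparison
    {G X : Type*} [Group G] [Countable G] [Infinite G]
    [MetricSpace X] [CompactSpace X] [Infinite X]
    [MeasurableSpace X] [BorelSpace X]
    [MulAction G X] [ContinuousConstSMul G X]
    (hG : AmenableGroup G)
    (hfree : FreeAction G X) (hmin : MinimalAction G X)
    (hcpt : IsCompact (EG G X)) (hzd : IsTotallyDisconnected (EG G X)) :
    List.TFAE
      [MAlmostFinite G X 0,
       ∃ m : ℕ, MAlmostFinite G X m,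
       HasMComparison G X 0,
       ∃ m : ℕ, HasMComparison G X m] := by
  tfae_have 1 → 2 := fun h => ⟨0, h⟩
  tfae_have 3 → 4 := fun h => ⟨0, h⟩
  tfae_have 1 → 3 := fun h => comparison_of_mAlmostFinite h
  tfae_have 2 → 4 := fun ⟨m, h⟩ => ⟨m, comparison_of_mAlmostFinite h⟩
  tfae_have 4 → 1 := fun ⟨m, h⟩ => almostFinite_of_comparison hG hfree hcpt hzd h
  tfae_finish
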